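/- arXiv:1411.4196 — 6 statements merged into one kernel-verified Lean document; each statement's English description precedes it below -/
import Mathlib

section
/- Let n ≥ 2 and let d be a real number. If ℱ is a family of subsets of [n] with |ℱ|² = n^d·2^n, then c(ℱ) ≤ 2^{−d/300}·|ℱ|². -/
open Finset

/-- `crossComp 𝒜 ℬ` is the number of pairs `(A, B) ∈ 𝒜 × ℬ` with `A ⊊ B`. -/
def crossComp {n : ℕ} (𝒜 ℬ : Finset (Finset (Fin n))) : ℕ :=
  ((𝒜 ×ˢ ℬ).filter (fun p => p.1 ⊂ p.2)).card

/-- `compCount ℱ` is the number of comparable pairs in `ℱ`, i.e. the number of unordered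
pairs `{A, B}` of distinct sets in `ℱ` with `A ⊆ B` or `B ⊆ A`.  This equals the number of
ordered pairs `(A, B) ∈ ℱ × ℱ` with `A ⊊ B`. -/
def compCount {n : ℕ} (ℱ : Finset (Finset (Fin n))) : ℕ := crossComp ℱ ℱ

/-! If `ℱ` has more than `2 * M * #ℱ` comparable pairs, then more than `M` members `B` of `ℱ` each
contain more than `M` members of `ℱ`. By subadditivity of entropy, when `M` is well above
`2 ^ (n / 2)` the union of `O(log n)` random members of `ℱ` below such a `B` has expected size more
than `n / 2 + 1`, so at least a fraction `1 / n` of the tuples of members below `B` have a union of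
more than `n / 2` points. But a union that large is contained in at most `2 ^ (n / 2)` sets `B`, and
counting the pairs (tuple, `B`) in both orders bounds `M`, hence the number of comparable pairs. -/

lemma sum_le_card_nsmul_add_card_filter_nsmul {ι M : Type*} [AddCommMonoid M] [LinearOrder M]
    [IsOrderedAddMonoid M] {s : Finset ι} {f : ι → M} {a b : M} (ha : 0 ≤ a)
    (hb : ∀ i ∈ s, f i ≤ b) : ∑ i ∈ s, f i ≤ #s • a + #{i ∈ s | a < f i} • b := by
  rw [← sum_const, ← sum_const, sum_filter, ← sum_add_distrib]
  refine sum_le_sum fun i hi ↦ ?_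
  split_ifs with h
  · exact (hb i hi).trans (le_add_of_nonneg_left ha)
  · simpa using h

section ComparablePairs

variable {β : Type*} [Preorder β] [DecidableLT β]

lemma two_mul_card_filter_lt_le_sq (s : Finset β) : 2 * #{p ∈ s ×ˢ s | p.1 < p.2} ≤ #s ^ 2 := by
  have hswap : #{p ∈ s ×ˢ s | p.2 < p.1} = #{p ∈ s ×ˢ s | p.1 < p.2} :=
    card_equiv (Equiv.prodComm β β) fun p ↦ by simp [and_comm]
  have hdisj : Disjoint {p ∈ s ×ˢ s | p.1 < p.2} {p ∈ s ×ˢ s | p.2 < p.1} :=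
    disjoint_filter.2 fun _ _ h ↦ h.asymm
  calc 2 * #{p ∈ s ×ˢ s | p.1 < p.2}
      = #({p ∈ s ×ˢ s | p.1 < p.2}.disjUnion {p ∈ s ×ˢ s | p.2 < p.1} hdisj) := by
        rw [card_disjUnion, hswap, two_mul]
    _ ≤ #(s ×ˢ s) := card_le_card fun p hp ↦
        (mem_disjUnion.1 hp).elim (mem_of_mem_filter p) (mem_of_mem_filter p)
    _ = #s ^ 2 := by rw [card_product, sq]

lemma card_filter_lt_le_sum_card_filter_le [DecidableLE β] (s : Finset β) :
    #{p ∈ s ×ˢ s | p.1 < p.2} ≤ ∑ b ∈ s, #{a ∈ s | a ≤ b} := by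
  simp only [card_filter, sum_product_right]
  refine sum_le_sum fun b _ ↦ sum_le_sum fun a _ ↦ ?_
  split_ifs with hlt hle
  · exact le_rfl
  · exact absurd hlt.le hle
  · exact zero_le_one
  · exact le_rfl

lemma lt_card_filter_lt_card_filter_le [DecidableLE β] {s : Finset β} {M : ℝ} (hM : 0 ≤ M)
    (h : 2 * M * #s < #{p ∈ s ×ˢ s | p.1 < p.2}) :
    M < #{b ∈ s | M < #{a ∈ s | a ≤ b}} := by
  have hpairs : (#{p ∈ s ×ˢ s | p.1 < p.2} : ℝ) ≤ ∑ b ∈ s, (#{a ∈ s | a ≤ b} : ℝ) :=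
    mod_cast card_filter_lt_le_sum_card_filter_le s
  have hsplit : ∑ b ∈ s, (#{a ∈ s | a ≤ b} : ℝ) ≤
      #s • M + #{b ∈ s | M < #{a ∈ s | a ≤ b}} • (#s : ℝ) :=
    sum_le_card_nsmul_add_card_filter_nsmul hM fun b _ ↦ mod_cast card_filter_le _ _
  simp only [nsmul_eq_mul] at hsplit
  refine lt_of_mul_lt_mul_right (a := (#s : ℝ)) ?_ (Nat.cast_nonneg _)
  linarith

end ComparablePairs

section BinaryEntropy

open Real

/- By concavity `p * log p⁻¹` lies below its tangent `p * log q⁻¹ + q - p` at `q`; the other summand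
of the entropy is at most `p`. -/
lemma binEntropy_le_mul_log_inv_add {p q : ℝ} (hp₀ : 0 ≤ p) (hp₁ : p ≤ 1) (hq : 0 < q) :
    binEntropy p ≤ p * log q⁻¹ + q := by
  have hright : (1 - p) * log (1 - p)⁻¹ ≤ p := by
    have := self_sub_one_le_mul_log (sub_nonneg.2 hp₁)
    rw [log_inv]
    linarith
  have hleft : p * log p⁻¹ ≤ p * log q⁻¹ + q - p := by
    obtain rfl | hp := hp₀.eq_or_lt
    · simpa using hq.le
    · have := mul_le_mul_of_nonneg_left (log_le_sub_one_of_pos (div_pos hq hp)) hp₀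
      rw [log_div hq.ne' hp.ne', mul_sub, mul_sub, mul_div_cancel₀ _ hp.ne'] at this
      rw [log_inv, log_inv]
      linarith
  rw [binEntropy]
  linarith

lemma one_sub_pow_mul_one_add_mul_le_one {p : ℝ} (hp₀ : 0 ≤ p) (hp₁ : p ≤ 1) (t : ℕ) :
    (1 - p) ^ t * (1 + t * p) ≤ 1 := by
  have : 0 ≤ 1 - p := sub_nonneg.2 hp₁
  calc (1 - p) ^ t * (1 + t * p) ≤ (1 - p) ^ t * (1 + p) ^ t := by
        gcongr
        exact one_add_mul_le_pow (by linarith) t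
    _ = ((1 - p) * (1 + p)) ^ t := (mul_pow ..).symm
    _ ≤ 1 := pow_le_one₀ (by positivity) (by nlinarith)

lemma one_sub_pow_le_two_inv_pow {p : ℝ} (hp : 1 / 16 ≤ p) (hp₁ : p ≤ 1) (k : ℕ) :
    (1 - p) ^ (32 * k) ≤ 2⁻¹ ^ k := by
  rw [pow_mul]
  refine pow_le_pow_left₀ (by positivity) ?_ k
  calc (1 - p) ^ 32 ≤ (15 / 16) ^ 32 := pow_le_pow_left₀ (by linarith) (by linarith) 32
    _ ≤ 2⁻¹ := by norm_num

/- The quantity `1 - (1 - p) ^ t` is the probability that a point of density `p` is covered by one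
of `t` random sets. For `p ≥ 1 / 16` it is within `2⁻¹ ^ k` of `1`; below that, the entropy is
controlled by its tangent line at `1 / 16` or at `2⁻¹ ^ k`, according to the size of `p * k`. -/
lemma binEntropy_le_one_sub_pow_mul_log_two {p : ℝ} (hp₀ : 0 ≤ p) (hp₁ : p ≤ 1) (k : ℕ) :
    binEntropy p ≤ (1 - (1 - p) ^ (32 * k)) * log 2 + 2⁻¹ ^ k := by
  have hlog₀ : 0.6931471803 < log 2 := log_two_gt_d9
  have hlog₁ : log 2 < 0.6931471808 := log_two_lt_d9
  have hpow : (0 : ℝ) < 2⁻¹ ^ k := by positivity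
  have huncov : (1 - p) ^ (32 * k) * (1 + 32 * (p * k)) ≤ 1 := by
    have := one_sub_pow_mul_one_add_mul_le_one hp₀ hp₁ (32 * k)
    push_cast at this
    linarith
  have hpk₀ : 0 ≤ p * k := by positivity
  have huncov₀ : 0 ≤ (1 - p) ^ (32 * k) := pow_nonneg (by linarith) _
  obtain hlarge | hsmall := le_or_gt (1 / 16) p
  · have := one_sub_pow_le_two_inv_pow hlarge hp₁ k
    linarith [binEntropy_le_log_two (p := p), mul_le_mul this hlog₁.le (by positivity) hpow.le]
  obtain hpk | hpk := le_or_gt (1 / 2) (p * k)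
  · have hent : binEntropy p ≤ p * (4 * log 2) + 1 / 16 := by
      have := binEntropy_le_mul_log_inv_add hp₀ hp₁ (q := 2⁻¹ ^ 4) (by norm_num)
      rw [← inv_pow, inv_inv, log_pow] at this
      linarith
    have : (1 - p) ^ (32 * k) ≤ 1 / 17 := by nlinarith
    nlinarith
  · have hent : binEntropy p ≤ p * (k * log 2) + 2⁻¹ ^ k := by
      simpa [log_pow] using binEntropy_le_mul_log_inv_add hp₀ hp₁ hpow
    have : p * k ≤ 1 - (1 - p) ^ (32 * k) := by
      by_contra!
      nlinarith
    nlinarith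

end BinaryEntropy

section SetFamilies

open Real

variable {α : Type*} [DecidableEq α]

/-- The density of the point `x` in the set family `𝒜`: the probability that a uniformly random
member of `𝒜` contains `x`. It is `0` when `𝒜` is empty. -/
noncomputable def memDensity (𝒜 : Finset (Finset α)) (x : α) : ℝ := #{A ∈ 𝒜 | x ∈ A} / #𝒜

section MemDensity

variable (𝒜 : Finset (Finset α)) (x : α)

lemma memDensity_nonneg : 0 ≤ memDensity 𝒜 x := by unfold memDensity; positivity

lemma memDensity_le_one : memDensity 𝒜 x ≤ 1 :=
  div_le_one_of_le₀ (mod_cast card_filter_le _ _) (Nat.cast_nonneg _)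

lemma card_filter_mem_eq_mul_memDensity : (#{A ∈ 𝒜 | x ∈ A} : ℝ) = #𝒜 * memDensity 𝒜 x := by
  obtain rfl | h𝒜 := 𝒜.eq_empty_or_nonempty
  · simp
  · rw [memDensity, mul_div_cancel₀ _ (mod_cast h𝒜.card_ne_zero)]

lemma card_filter_notMem_eq_mul_one_sub_memDensity :
    (#{A ∈ 𝒜 | x ∉ A} : ℝ) = #𝒜 * (1 - memDensity 𝒜 x) := by
  have : (#{A ∈ 𝒜 | x ∈ A} + #{A ∈ 𝒜 | x ∉ A} : ℝ) = #𝒜 :=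
    mod_cast card_filter_add_card_filter_not (s := 𝒜) (x ∈ ·)
  rw [mul_sub, mul_one, ← card_filter_mem_eq_mul_memDensity]
  linarith

variable {𝒜 x} {A : Finset α}

lemma memDensity_pos (hA : A ∈ 𝒜) (hx : x ∈ A) : 0 < memDensity 𝒜 x := by
  have h₁ : 0 < #{A ∈ 𝒜 | x ∈ A} := card_pos.2 ⟨A, mem_filter.2 ⟨hA, hx⟩⟩
  have h₂ : 0 < #𝒜 := card_pos.2 ⟨A, hA⟩
  unfold memDensity
  positivity

lemma memDensity_lt_one (hA : A ∈ 𝒜) (hx : x ∉ A) : memDensity 𝒜 x < 1 :=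
  (div_lt_one (mod_cast card_pos.2 ⟨A, hA⟩)).2 <|
    mod_cast card_lt_card (filter_ssubset.2 ⟨A, hA, hx⟩)

end MemDensity

variable [Fintype α]

/-- The probability of obtaining `A` when each point `x` is selected independently with probability
`p x`. -/
def bernoulliWeight (p : α → ℝ) (A : Finset α) : ℝ := (∏ x ∈ A, p x) * ∏ x ∈ Aᶜ, (1 - p x)

lemma sum_bernoulliWeight (p : α → ℝ) : ∑ A, bernoulliWeight p A = 1 := by
  simp only [bernoulliWeight, ← Fintype.prod_add, add_sub_cancel, prod_const_one]

lemma bernoulliWeight_nonneg {p : α → ℝ} (hp₀ : ∀ x, 0 ≤ p x) (hp₁ : ∀ x, p x ≤ 1)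
    (A : Finset α) : 0 ≤ bernoulliWeight p A :=
  mul_nonneg (prod_nonneg fun x _ ↦ hp₀ x) (prod_nonneg fun x _ ↦ sub_nonneg.2 (hp₁ x))

lemma bernoulliWeight_memDensity_pos {𝒜 : Finset (Finset α)} {A : Finset α} (hA : A ∈ 𝒜) :
    0 < bernoulliWeight (memDensity 𝒜) A :=
  mul_pos (prod_pos fun _ hx ↦ memDensity_pos hA hx)
    (prod_pos fun _ hx ↦ sub_pos.2 (memDensity_lt_one hA (mem_compl.1 hx)))

lemma sum_log_bernoulliWeight_memDensity (𝒜 : Finset (Finset α)) :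
    ∑ A ∈ 𝒜, log (bernoulliWeight (memDensity 𝒜) A) =
      -(#𝒜 * ∑ x, binEntropy (memDensity 𝒜 x)) := by
  have hlog : ∀ A ∈ 𝒜, log (bernoulliWeight (memDensity 𝒜) A) =
      ∑ x, if x ∈ A then log (memDensity 𝒜 x) else log (1 - memDensity 𝒜 x) := fun A hA ↦ by
    have hw := (bernoulliWeight_memDensity_pos hA).ne'
    rw [bernoulliWeight] at hw ⊢
    rw [log_mul (left_ne_zero_of_mul hw) (right_ne_zero_of_mul hw),
      log_prod (prod_ne_zero_iff.1 (left_ne_zero_of_mul hw)),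
      log_prod (prod_ne_zero_iff.1 (right_ne_zero_of_mul hw)), sum_ite]
    congr 2 <;> ext <;> simp
  rw [sum_congr rfl hlog, sum_comm, mul_sum, ← sum_neg_distrib]
  refine sum_congr rfl fun x _ ↦ ?_
  rw [sum_ite, sum_const, sum_const, nsmul_eq_mul, nsmul_eq_mul, card_filter_mem_eq_mul_memDensity,
    card_filter_notMem_eq_mul_one_sub_memDensity, binEntropy, log_inv, log_inv]
  ring

/- Gibbs' inequality between the uniform distribution on `𝒜` and the product distribution with the
same marginals. -/
lemma log_card_le_sum_binEntropy_memDensity (𝒜 : Finset (Finset α)) :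
    log #𝒜 ≤ ∑ x, binEntropy (memDensity 𝒜 x) := by
  obtain rfl | h𝒜 := 𝒜.eq_empty_or_nonempty
  · simp [memDensity]
  have hcard : (0 : ℝ) < #𝒜 := mod_cast h𝒜.card_pos
  have hmass : ∑ A ∈ 𝒜, bernoulliWeight (memDensity 𝒜) A ≤ 1 := by
    rw [← sum_bernoulliWeight (memDensity 𝒜)]
    exact sum_le_sum_of_subset_of_nonneg (subset_univ _) fun A _ _ ↦
      bernoulliWeight_nonneg (memDensity_nonneg 𝒜) (memDensity_le_one 𝒜) A
  have hgibbs : ∑ A ∈ 𝒜, (log #𝒜 + log (bernoulliWeight (memDensity 𝒜) A)) ≤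
      ∑ A ∈ 𝒜, (#𝒜 * bernoulliWeight (memDensity 𝒜) A - 1) := sum_le_sum fun A hA ↦ by
    have hw := bernoulliWeight_memDensity_pos hA
    rw [← log_mul hcard.ne' hw.ne']
    exact log_le_sub_one_of_pos (mul_pos hcard hw)
  rw [sum_add_distrib, sum_sub_distrib, ← mul_sum, sum_log_bernoulliWeight_memDensity, sum_const,
    sum_const, nsmul_eq_mul, nsmul_eq_mul] at hgibbs
  refine le_of_mul_le_mul_left ?_ hcard
  nlinarith

lemma sum_card_biUnion_piFinset (𝒜 : Finset (Finset α)) (t : ℕ) :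
    ∑ f ∈ Fintype.piFinset fun _ : Fin t ↦ 𝒜, (#(univ.biUnion f) : ℝ) =
      #𝒜 ^ t * ∑ x, (1 - (1 - memDensity 𝒜 x) ^ t) := by
  have hcover (x : α) : (#{f ∈ Fintype.piFinset fun _ : Fin t ↦ 𝒜 | x ∈ univ.biUnion f} : ℝ) =
      #𝒜 ^ t * (1 - (1 - memDensity 𝒜 x) ^ t) := by
    have havoid : {f ∈ Fintype.piFinset fun _ : Fin t ↦ 𝒜 | x ∉ univ.biUnion f} =
        Fintype.piFinset fun _ ↦ {A ∈ 𝒜 | x ∉ A} := by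
      ext f
      simp [forall_and]
    have hsplit := card_filter_add_card_filter_not
      (s := Fintype.piFinset fun _ : Fin t ↦ 𝒜) (x ∈ univ.biUnion ·)
    rw [havoid, Fintype.card_piFinset_const, Fintype.card_piFinset_const] at hsplit
    rw [mul_sub, mul_one, ← mul_pow, ← card_filter_notMem_eq_mul_one_sub_memDensity]
    exact eq_sub_of_add_eq (mod_cast hsplit)
  have hcount : ∑ f ∈ Fintype.piFinset fun _ : Fin t ↦ 𝒜, #{x | x ∈ univ.biUnion f} =
      ∑ x, #{f ∈ Fintype.piFinset fun _ : Fin t ↦ 𝒜 | x ∈ univ.biUnion f} :=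
    sum_card_bipartiteAbove_eq_sum_card_bipartiteBelow fun f x ↦ x ∈ univ.biUnion f
  simp only [filter_univ_mem] at hcount
  simp_rw [mul_sum, ← hcover]
  exact_mod_cast hcount

/-- The `t`-tuples of members of `𝒜` whose union has more than half of the points of the ground
set. -/
def heavyTuples (𝒜 : Finset (Finset α)) (t : ℕ) : Finset (Fin t → Finset α) :=
  {f ∈ Fintype.piFinset fun _ ↦ 𝒜 | Fintype.card α < 2 * #(univ.biUnion f)}

lemma card_heavyTuples_le (𝒜 : Finset (Finset α)) (t : ℕ) : #(heavyTuples 𝒜 t) ≤ #𝒜 ^ t :=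
  (card_filter_le _ _).trans_eq (Fintype.card_piFinset_const 𝒜 t)

lemma two_mul_sum_card_biUnion_le (𝒜 : Finset (Finset α)) (t : ℕ) :
    ∑ f ∈ Fintype.piFinset fun _ : Fin t ↦ 𝒜, 2 * #(univ.biUnion f) ≤
      #𝒜 ^ t * Fintype.card α + #(heavyTuples 𝒜 t) * (2 * Fintype.card α) := by
  rw [← Fintype.card_piFinset_const]
  exact sum_le_card_nsmul_add_card_filter_nsmul (Nat.zero_le _) fun f _ ↦
    Nat.mul_le_mul_left 2 (card_le_univ _)

lemma card_pow_le_card_mul_card_heavyTuples {𝒜 : Finset (Finset α)} {k : ℕ}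
    (hk : Fintype.card α ≤ 2 ^ k)
    (h𝒜 : (Fintype.card α / 2 + 1) * log 2 + 1 ≤ log #𝒜) :
    (#𝒜 : ℝ) ^ (32 * k) ≤ Fintype.card α * #(heavyTuples 𝒜 (32 * k)) := by
  set n := Fintype.card α
  have hlog : 0 < log 2 := log_pos one_lt_two
  have hrem : (n : ℝ) * 2⁻¹ ^ k ≤ 1 := by
    rw [inv_pow, ← div_eq_mul_inv]
    exact div_le_one_of_le₀ (mod_cast hk) (by positivity)
  have hentropy :
      log #𝒜 ≤ (∑ x, (1 - (1 - memDensity 𝒜 x) ^ (32 * k))) * log 2 + n * 2⁻¹ ^ k :=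
    calc log #𝒜 ≤ ∑ x, binEntropy (memDensity 𝒜 x) := log_card_le_sum_binEntropy_memDensity 𝒜
      _ ≤ ∑ x, ((1 - (1 - memDensity 𝒜 x) ^ (32 * k)) * log 2 + 2⁻¹ ^ k) :=
        sum_le_sum fun x _ ↦ binEntropy_le_one_sub_pow_mul_log_two
          (memDensity_nonneg 𝒜 x) (memDensity_le_one 𝒜 x) k
      _ = _ := by rw [sum_add_distrib, ← sum_mul, sum_const, card_univ, nsmul_eq_mul]
  have hmean : n / 2 + 1 ≤ ∑ x, (1 - (1 - memDensity 𝒜 x) ^ (32 * k)) :=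
    le_of_mul_le_mul_right (by linarith) hlog
  have hlower : (#𝒜 : ℝ) ^ (32 * k) * (n / 2 + 1) ≤
      ∑ f ∈ Fintype.piFinset fun _ : Fin (32 * k) ↦ 𝒜, (#(univ.biUnion f) : ℝ) := by
    rw [sum_card_biUnion_piFinset]
    gcongr
  have hupper : 2 * ∑ f ∈ Fintype.piFinset fun _ : Fin (32 * k) ↦ 𝒜, (#(univ.biUnion f) : ℝ) ≤
      #𝒜 ^ (32 * k) * n + #(heavyTuples 𝒜 (32 * k)) * (2 * n) := by
    rw [mul_sum]
    exact_mod_cast two_mul_sum_card_biUnion_le 𝒜 (32 * k)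
  linarith

lemma card_filter_superset_le (ℱ : Finset (Finset α)) (U : Finset α) :
    #{B ∈ ℱ | U ⊆ B} ≤ 2 ^ (Fintype.card α - #U) := by
  rw [← card_univ, ← card_Icc_finset (subset_univ U)]
  exact card_le_card fun B hB ↦ mem_Icc.2 ⟨(mem_filter.1 hB).2, subset_univ B⟩

lemma sum_card_heavyTuples_filter_subset_le (ℱ : Finset (Finset α)) (t : ℕ) :
    ∑ B ∈ ℱ, #(heavyTuples {A ∈ ℱ | A ⊆ B} t) ≤ #ℱ ^ t * 2 ^ (Fintype.card α / 2) := by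
  have hbelow (B : Finset α) : heavyTuples {A ∈ ℱ | A ⊆ B} t =
      {f ∈ heavyTuples ℱ t | univ.biUnion f ⊆ B} := by
    ext f
    simp only [heavyTuples, mem_filter, Fintype.mem_piFinset, forall_and, biUnion_subset, mem_univ,
      true_imp_iff]
    tauto
  calc ∑ B ∈ ℱ, #(heavyTuples {A ∈ ℱ | A ⊆ B} t)
      = ∑ f ∈ heavyTuples ℱ t, #{B ∈ ℱ | univ.biUnion f ⊆ B} := by
        simp_rw [hbelow]
        exact (sum_card_bipartiteAbove_eq_sum_card_bipartiteBelow
          fun (f : Fin t → Finset α) B ↦ univ.biUnion f ⊆ B).symm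
    _ ≤ #(heavyTuples ℱ t) • 2 ^ (Fintype.card α / 2) := by
        refine sum_le_card_nsmul _ _ _ fun f hf ↦ (card_filter_superset_le ℱ _).trans ?_
        have hheavy := (mem_filter.1 hf).2
        exact Nat.pow_le_pow_right two_pos (by omega)
    _ ≤ #ℱ ^ t * 2 ^ (Fintype.card α / 2) := by
        rw [smul_eq_mul]
        exact Nat.mul_le_mul_right _ (card_heavyTuples_le ℱ t)

lemma pow_le_of_lt_card_comparable {ℱ : Finset (Finset α)} {k : ℕ} {M : ℝ}
    (hk : Fintype.card α ≤ 2 ^ k) (hM₀ : 0 < M)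
    (hM : (Fintype.card α / 2 + 1) * log 2 + 1 ≤ log M)
    (hℱ : 2 * M * #ℱ < #{p ∈ ℱ ×ˢ ℱ | p.1 ⊂ p.2}) :
    M ^ (32 * k + 1) ≤ Fintype.card α * (#ℱ ^ (32 * k) * 2 ^ (Fintype.card α / 2)) := by
  set rich : Finset (Finset α) := {B ∈ ℱ | M < #{A ∈ ℱ | A ⊆ B}}
  have hrich_card : M ≤ #rich := (lt_card_filter_lt_card_filter_le hM₀.le hℱ).le
  have hheavy : ∀ B ∈ rich, M ^ (32 * k) ≤
      Fintype.card α * #(heavyTuples {A ∈ ℱ | A ⊆ B} (32 * k)) := fun B hB ↦ by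
    have hB : M ≤ #{A ∈ ℱ | A ⊆ B} := (mem_filter.1 hB).2.le
    exact (pow_le_pow_left₀ hM₀.le hB _).trans <|
      card_pow_le_card_mul_card_heavyTuples hk (hM.trans (log_le_log hM₀ hB))
  calc M ^ (32 * k + 1) ≤ #rich * M ^ (32 * k) := by rw [pow_succ']; gcongr
    _ ≤ ∑ B ∈ rich, (Fintype.card α * #(heavyTuples {A ∈ ℱ | A ⊆ B} (32 * k)) : ℝ) := by
        rw [← nsmul_eq_mul]
        exact card_nsmul_le_sum _ _ _ hheavy
    _ ≤ Fintype.card α * ∑ B ∈ ℱ, (#(heavyTuples {A ∈ ℱ | A ⊆ B} (32 * k)) : ℝ) := by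
        rw [← mul_sum]
        gcongr
        exact filter_subset _ _
    _ ≤ Fintype.card α * (#ℱ ^ (32 * k) * 2 ^ (Fintype.card α / 2)) := by
        gcongr
        exact_mod_cast sum_card_heavyTuples_filter_subset_le ℱ (32 * k)

theorem log_card_le_of_lt_card_comparable {ℱ : Finset (Finset α)} {k : ℕ} {s : ℝ}
    (hk : Fintype.card α ≤ 2 ^ k)
    (hcard : (Fintype.card α / 2 + 1 + s) * log 2 + 1 ≤ log #ℱ)
    (hℱ : 2 ^ (1 - s) * (#ℱ : ℝ) ^ 2 < #{p ∈ ℱ ×ˢ ℱ | p.1 ⊂ p.2}) :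
    log #ℱ ≤ log (Fintype.card α) + (Fintype.card α / 2 + (32 * k + 1) * s) * log 2 := by
  have hcard₀ : (0 : ℝ) < #ℱ := by
    rw [Nat.cast_pos, card_pos, nonempty_iff_ne_empty]
    rintro rfl
    simp at hℱ
  set M : ℝ := #ℱ * 2 ^ (-s) with hM
  have hM₀ : 0 < M := by positivity
  have hlogM : log M = log #ℱ - s * log 2 := by
    rw [hM, log_mul hcard₀.ne' (by positivity), log_rpow two_pos]
    ring
  have hpairs : 2 * M * #ℱ = 2 ^ (1 - s) * (#ℱ : ℝ) ^ 2 := by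
    rw [hM, sub_eq_add_neg, rpow_add two_pos, rpow_one]
    ring
  have hpow := pow_le_of_lt_card_comparable hk hM₀ (by linarith) (hpairs.trans_lt hℱ)
  have hn : (Fintype.card α : ℝ) ≠ 0 := left_ne_zero_of_mul ((pow_pos hM₀ _).trans_le hpow).ne'
  have hlog := log_le_log (by positivity) hpow
  rw [log_mul hn (by positivity), log_mul (by positivity) (by positivity), log_pow, log_pow,
    log_pow, hlogM] at hlog
  push_cast at hlog
  have hhalf : ((Fintype.card α / 2 : ℕ) : ℝ) * log 2 ≤ Fintype.card α / 2 * log 2 := by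
    gcongr
    exact_mod_cast Nat.cast_div_le (α := ℝ) (m := Fintype.card α) (n := 2)
  linarith

end SetFamilies

lemma clog_two_mul_log_two_le {n : ℕ} (hn : 2 ≤ n) :
    Nat.clog 2 n * Real.log 2 ≤ 2 * Real.log n := by
  have h : 2 ^ Nat.clog 2 n ≤ n ^ 2 :=
    calc 2 ^ Nat.clog 2 n = 2 * 2 ^ (Nat.clog 2 n).pred := by
          rw [← pow_succ', Nat.pred_eq_sub_one, Nat.sub_add_cancel (Nat.clog_pos one_lt_two hn)]
      _ ≤ n * n := Nat.mul_le_mul hn (Nat.pow_pred_clog_lt_self one_lt_two hn).le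
      _ = n ^ 2 := (sq n).symm
  have hlog : Real.log (2 ^ Nat.clog 2 n) ≤ Real.log (n ^ 2) :=
    Real.log_le_log (by positivity) (mod_cast h)
  simpa only [Real.log_pow, Nat.cast_ofNat] using hlog

theorem stmt1_general {α : Type*} [Fintype α] [DecidableEq α] (hα : 2 ≤ Fintype.card α) (d : ℝ)
    (ℱ : Finset (Finset α)) (hℱ : (Fintype.card α : ℝ) ^ d * 2 ^ Fintype.card α ≤ #ℱ ^ 2) :
    #{p ∈ ℱ ×ˢ ℱ | p.1 ⊂ p.2} ≤ (2 : ℝ) ^ (-d / 300) * #ℱ ^ 2 := by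
  obtain hd | hd := le_or_gt d 300
  · have hhalf : (2 * #{p ∈ ℱ ×ˢ ℱ | p.1 ⊂ p.2} : ℝ) ≤ #ℱ ^ 2 :=
      mod_cast two_mul_card_filter_lt_le_sq ℱ
    have hfactor : (2 : ℝ)⁻¹ ≤ 2 ^ (-d / 300) := by
      rw [← Real.rpow_neg_one]
      exact Real.rpow_le_rpow_of_exponent_le one_le_two (by linarith)
    linarith [mul_le_mul_of_nonneg_right hfactor (sq_nonneg (#ℱ : ℝ))]
  by_contra! hmany
  set n := Fintype.card α
  have hlog : Real.log 2 ≤ Real.log n := Real.log_le_log two_pos (mod_cast hα)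
  have hlog₂ : 1 / 2 < Real.log 2 := by linarith [Real.log_two_gt_d9]
  have hcard : d / 2 * Real.log n + n / 2 * Real.log 2 ≤ Real.log #ℱ := by
    have hn : (0 : ℝ) < n := by positivity
    have := Real.log_le_log (by positivity) hℱ
    rw [Real.log_mul (by positivity) (by positivity), Real.log_rpow hn, Real.log_pow,
      Real.log_pow] at this
    push_cast at this
    linarith
  have hlarge : (n / 2 + 1 + (1 + d / 300)) * Real.log 2 + 1 ≤ Real.log #ℱ := by
    nlinarith [mul_le_mul_of_nonneg_left hlog (by linarith : 0 ≤ d)]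
  have hupper : Real.log #ℱ ≤
      Real.log n + (n / 2 + (32 * Nat.clog 2 n + 1) * (1 + d / 300)) * Real.log 2 := by
    refine log_card_le_of_lt_card_comparable (Nat.le_pow_clog one_lt_two n) hlarge ?_
    rwa [sub_add_cancel_left, ← neg_div]
  have hexponent : (32 * Nat.clog 2 n + 1) * Real.log 2 ≤ 65 * Real.log n := by
    linarith [clog_two_mul_log_two_le hα]
  have := mul_le_mul_of_nonneg_right hexponent (by linarith : 0 ≤ 1 + d / 300)
  nlinarith

theorem stmt1 (n : ℕ) (hn : 2 ≤ n) (d : ℝ) (ℱ : Finset (Finset (Fin n)))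
    (h : (ℱ.card : ℝ) ^ 2 = (n : ℝ) ^ d * 2 ^ n) :
    (compCount ℱ : ℝ) ≤ (2 : ℝ) ^ (-d / 300) * (ℱ.card : ℝ) ^ 2 := by
  simpa only [compCount, crossComp, Fintype.card_fin] using
    stmt1_general (by simpa using hn) d ℱ (by simpa using h.ge)
end

section
/- Let k ≥ 2 be an integer dividing n, let ℓ = n/k, and let ℱ be a tower of k cubes of dimension ℓ over [n]. Then |ℱ| = k·2^{ℓ} − k + 1 and c(ℱ) ≥ (1 − 1/k)·binom(|ℱ|,2). -/
open Finset

/-- `IsTower n k 𝒯` says that `𝒯` is a tower of `k` cubes of dimension `n/k` over `[n]`. -/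
def IsTower (n k : ℕ) (𝒯 : Finset (Finset (Fin n))) : Prop :=
  ∃ X : ℕ → Finset (Fin n),
    X 0 = ∅ ∧ X k = Finset.univ ∧
    (∀ i ≤ k, (X i).card = i * (n / k)) ∧
    (∀ i < k, X i ⊆ X (i + 1)) ∧
    𝒯 = Finset.univ.filter (fun F => ∃ i ∈ Finset.Icc 1 k, X (i - 1) ⊆ F ∧ F ⊆ X i)

/-!
Without its top element `X k`, the tower splits into the `k` blocks `Ico (X i) (X (i + 1))`, each
with `m = 2 ^ (n / k) - 1` elements. Elements of different blocks are comparable, and the top is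
comparable to everything, so there are at least `k.choose 2 * m ^ 2 + k * m` comparable pairs,
whereas `(1 - 1 / k) * (k * m + 1).choose 2 = k.choose 2 * m ^ 2 + (k - 1) * m / 2`.
-/

section ComparablePairs

variable {α : Type*} [Preorder α]

theorem disjoint_of_forall_lt {s t : Finset α} (h : ∀ a ∈ s, ∀ b ∈ t, a < b) : Disjoint s t :=
  disjoint_left.2 fun a has hat ↦ lt_irrefl a (h a has a hat)

variable [DecidableLT α]

/-- The comparable pairs of distinct elements of `s`, each encoded once as the ordered pair
`(smaller, larger)`; the order-theoretic form of the pairs counted by `compCount`. -/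
def comparablePairs (s : Finset α) : Finset (α × α) := {p ∈ s ×ˢ s | p.1 < p.2}

theorem mem_comparablePairs {s : Finset α} {p : α × α} :
    p ∈ comparablePairs s ↔ p.1 ∈ s ∧ p.2 ∈ s ∧ p.1 < p.2 := by
  rw [comparablePairs, mem_filter, mem_product, and_assoc]

theorem compCount_eq_card_comparablePairs {n : ℕ} (ℱ : Finset (Finset (Fin n))) :
    compCount ℱ = #(comparablePairs ℱ) :=
  rfl

theorem card_comparablePairs_add_card_mul_card_le [DecidableEq α] {s t : Finset α}
    (h : ∀ a ∈ s, ∀ b ∈ t, a < b) :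
    #(comparablePairs s) + #s * #t ≤ #(comparablePairs (s ∪ t)) := by
  have hdisj : Disjoint (comparablePairs s) (s ×ˢ t) :=
    (disjoint_product.2 (.inr (disjoint_of_forall_lt h))).mono_left (filter_subset _ _)
  rw [← card_product, ← card_union_of_disjoint hdisj]
  refine card_le_card fun p hp ↦ mem_comparablePairs.2 ?_
  rcases mem_union.1 hp with hp | hp
  · obtain ⟨h₁, h₂, hlt⟩ := mem_comparablePairs.1 hp
    exact ⟨mem_union_left t h₁, mem_union_left t h₂, hlt⟩
  · obtain ⟨h₁, h₂⟩ := mem_product.1 hp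
    exact ⟨mem_union_left t h₁, mem_union_right s h₂, h _ h₁ _ h₂⟩

end ComparablePairs

theorem one_sub_one_div_mul_choose_two_le {k : ℕ} (hk : 0 < k) (m : ℕ) :
    (1 - 1 / (k : ℝ)) * ((k * m + 1).choose 2 : ℝ) ≤ k.choose 2 * m ^ 2 + k * m := by
  have hk' : (k : ℝ) ≠ 0 := by positivity
  calc (1 - 1 / (k : ℝ)) * ((k * m + 1).choose 2 : ℝ)
      = k.choose 2 * m ^ 2 + (k - 1) * m / 2 := by
        rw [Nat.cast_choose_two, Nat.cast_choose_two]
        push_cast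
        field_simp
        ring
    _ ≤ k.choose 2 * m ^ 2 + k * m := by
        have hkm : (0 : ℝ) ≤ k * m := by positivity
        linarith [m.cast_nonneg (α := ℝ)]

section IntervalTower

variable {α : Type*} [PartialOrder α] [LocallyFiniteOrder α] [DecidableEq α]
  {X : ℕ → α} {k m q : ℕ}

/-- The tower of intervals `[X 0, X 1], …, [X (k - 1), X k]`; a tower of cubes is the case of a
chain of sets. -/
def intervalTower (X : ℕ → α) (k : ℕ) : Finset α :=
  (range k).biUnion fun i ↦ Icc (X i) (X (i + 1))

/-- The tower of half-open intervals `[X 0, X 1), …, [X (k - 1), X k)`. Unlike the closed ones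
these are disjoint, and they miss only the top element of `intervalTower X k`. -/
def icoTower (X : ℕ → α) (k : ℕ) : Finset α :=
  (range k).biUnion fun i ↦ Ico (X i) (X (i + 1))

theorem intervalTower_succ (X : ℕ → α) (k : ℕ) :
    intervalTower X (k + 1) = intervalTower X k ∪ Icc (X k) (X (k + 1)) := by
  rw [intervalTower, range_add_one, biUnion_insert, union_comm, intervalTower]

theorem icoTower_succ (X : ℕ → α) (k : ℕ) :
    icoTower X (k + 1) = icoTower X k ∪ Ico (X k) (X (k + 1)) := by
  rw [icoTower, range_add_one, biUnion_insert, union_comm, icoTower]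

theorem intervalTower_eq_icoTower_union (hk : 0 < k) (hX : ∀ i < k, X i ≤ X (i + 1)) :
    intervalTower X k = icoTower X k ∪ {X k} := by
  induction k, hk using Nat.le_induction with
  | base => simp [intervalTower, icoTower, ← Ico_insert_right (hX 0 zero_lt_one)]
  | succ k _ ih =>
    have hle : X k ≤ X (k + 1) := hX k k.lt_succ_self
    calc intervalTower X (k + 1)
        = icoTower X k ∪ {X k} ∪ Icc (X k) (X (k + 1)) := by
          rw [intervalTower_succ, ih fun i hi ↦ hX i (Nat.lt_succ_of_lt hi)]
      _ = icoTower X k ∪ Icc (X k) (X (k + 1)) := by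
          rw [union_assoc, union_eq_right.2 (singleton_subset_iff.2 (left_mem_Icc.2 hle))]
      _ = icoTower X (k + 1) ∪ {X (k + 1)} := by
          rw [icoTower_succ, union_assoc, union_singleton, Ico_insert_right hle]

theorem lt_of_mem_icoTower (hX : ∀ i < k, X i ≤ X (i + 1)) {a : α} (ha : a ∈ icoTower X k) :
    a < X k := by
  induction k with
  | zero => simp [icoTower] at ha
  | succ k ih =>
    rw [icoTower_succ, mem_union, mem_Ico] at ha
    rcases ha with ha | ha
    · exact (ih (fun i hi ↦ hX i (Nat.lt_succ_of_lt hi)) ha).trans_le (hX k k.lt_succ_self)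
    · exact ha.2

theorem icoTower_lt_Ico (hX : ∀ i < k, X i ≤ X (i + 1)) (c : α) :
    ∀ a ∈ icoTower X k, ∀ b ∈ Ico (X k) c, a < b :=
  fun _ ha _ hb ↦ (lt_of_mem_icoTower hX ha).trans_le (mem_Ico.1 hb).1

theorem icoTower_lt_singleton (hX : ∀ i < k, X i ≤ X (i + 1)) :
    ∀ a ∈ icoTower X k, ∀ b ∈ ({X k} : Finset α), a < b :=
  fun _ ha _ hb ↦ (lt_of_mem_icoTower hX ha).trans_eq (mem_singleton.1 hb).symm

theorem card_icoTower (hX : ∀ i < k, X i ≤ X (i + 1))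
    (hm : ∀ i < k, #(Ico (X i) (X (i + 1))) = m) : #(icoTower X k) = k * m := by
  induction k with
  | zero => simp [icoTower]
  | succ k ih =>
    have hX' : ∀ i < k, X i ≤ X (i + 1) := fun i hi ↦ hX i (Nat.lt_succ_of_lt hi)
    rw [icoTower_succ, card_union_of_disjoint (disjoint_of_forall_lt (icoTower_lt_Ico hX' _)),
      ih hX' fun i hi ↦ hm i (Nat.lt_succ_of_lt hi), hm k k.lt_succ_self, Nat.succ_mul]

theorem card_intervalTower (hk : 0 < k) (hX : ∀ i < k, X i ≤ X (i + 1))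
    (hm : ∀ i < k, #(Ico (X i) (X (i + 1))) = m) : #(intervalTower X k) = k * m + 1 := by
  rw [intervalTower_eq_icoTower_union hk hX,
    card_union_of_disjoint (disjoint_of_forall_lt (icoTower_lt_singleton hX)),
    card_icoTower hX hm, card_singleton]

variable [DecidableLT α]

theorem choose_two_mul_sq_le_card_comparablePairs_icoTower (hX : ∀ i < k, X i ≤ X (i + 1))
    (hm : ∀ i < k, #(Ico (X i) (X (i + 1))) = m) :
    k.choose 2 * m ^ 2 ≤ #(comparablePairs (icoTower X k)) := by
  induction k with
  | zero => simp
  | succ k ih =>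
    have hX' : ∀ i < k, X i ≤ X (i + 1) := fun i hi ↦ hX i (Nat.lt_succ_of_lt hi)
    have hm' : ∀ i < k, #(Ico (X i) (X (i + 1))) = m := fun i hi ↦ hm i (Nat.lt_succ_of_lt hi)
    calc (k + 1).choose 2 * m ^ 2
        = k.choose 2 * m ^ 2 + k * m * m := by
          rw [Nat.choose_succ_succ' k 1, Nat.choose_one_right]; ring
      _ ≤ #(comparablePairs (icoTower X k)) + #(icoTower X k) * #(Ico (X k) (X (k + 1))) := by
          rw [card_icoTower hX' hm', hm k k.lt_succ_self]
          gcongr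
          exact ih hX' hm'
      _ ≤ #(comparablePairs (icoTower X (k + 1))) :=
          icoTower_succ X k ▸ card_comparablePairs_add_card_mul_card_le (icoTower_lt_Ico hX' _)

theorem choose_two_mul_sq_add_le_card_comparablePairs_intervalTower (hk : 0 < k)
    (hX : ∀ i < k, X i ≤ X (i + 1)) (hm : ∀ i < k, #(Ico (X i) (X (i + 1))) = m) :
    k.choose 2 * m ^ 2 + k * m ≤ #(comparablePairs (intervalTower X k)) :=
  calc k.choose 2 * m ^ 2 + k * m
      ≤ #(comparablePairs (icoTower X k)) + #(icoTower X k) * #{X k} := by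
        rw [card_icoTower hX hm, card_singleton, mul_one]
        gcongr
        exact choose_two_mul_sq_le_card_comparablePairs_icoTower hX hm
    _ ≤ #(comparablePairs (intervalTower X k)) :=
        intervalTower_eq_icoTower_union hk hX ▸
          card_comparablePairs_add_card_mul_card_le (icoTower_lt_singleton hX)

theorem stmt7_general (hk : 0 < k) (hX : ∀ i < k, X i ≤ X (i + 1))
    (hq : ∀ i < k, #(Icc (X i) (X (i + 1))) = q) :
    #(intervalTower X k) = k * q - k + 1 ∧
      (1 - 1 / (k : ℝ)) * ((#(intervalTower X k)).choose 2 : ℝ) ≤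
        #(comparablePairs (intervalTower X k)) := by
  have hm : ∀ i < k, #(Ico (X i) (X (i + 1))) = q - 1 := fun i hi ↦ by
    rw [card_Ico_eq_card_Icc_sub_one, hq i hi]
  have hcard : #(intervalTower X k) = k * (q - 1) + 1 := card_intervalTower hk hX hm
  refine ⟨by rw [hcard, Nat.mul_sub_one], ?_⟩
  rw [hcard]
  refine (one_sub_one_div_mul_choose_two_le hk (q - 1)).trans ?_
  exact_mod_cast choose_two_mul_sq_add_le_card_comparablePairs_intervalTower hk hX hm

end IntervalTower

theorem IsTower.exists_eq_intervalTower {n k : ℕ} {𝒯 : Finset (Finset (Fin n))}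
    (h : IsTower n k 𝒯) :
    ∃ X : ℕ → Finset (Fin n), (∀ i < k, X i ≤ X (i + 1)) ∧
      (∀ i < k, #(Icc (X i) (X (i + 1))) = 2 ^ (n / k)) ∧ 𝒯 = intervalTower X k := by
  obtain ⟨X, -, -, hcard, hX, rfl⟩ := h
  refine ⟨X, hX, fun i hi ↦ ?_, ?_⟩
  · rw [card_Icc_finset (hX i hi), hcard _ hi, hcard i hi.le, Nat.succ_mul, Nat.add_sub_cancel_left]
  · ext F
    simp only [intervalTower, mem_filter, mem_univ, true_and, mem_biUnion, mem_range, mem_Icc]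
    constructor
    · rintro ⟨i, ⟨hi, hik⟩, hF⟩
      exact ⟨i - 1, by lia, by rwa [Nat.sub_add_cancel hi]⟩
    · rintro ⟨i, hi, hF⟩
      exact ⟨i + 1, ⟨by lia, hi⟩, hF⟩

theorem stmt7 (n k : ℕ) (hk : 2 ≤ k) (hdvd : k ∣ n)
    (ℱ : Finset (Finset (Fin n))) (hT : IsTower n k ℱ) :
    ℱ.card = k * 2 ^ (n / k) - k + 1 ∧
      (1 - 1 / (k : ℝ)) * (ℱ.card.choose 2 : ℝ) ≤ (compCount ℱ : ℝ) := by
  obtain ⟨X, hX, hq, rfl⟩ := hT.exists_eq_intervalTower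
  exact compCount_eq_card_comparablePairs (intervalTower X k) ▸
    stmt7_general (Nat.zero_lt_of_lt hk) hX hq
end

section
/- For every integer k ≥ 2 and every γ > 0 there is an n₀ = n₀(k,γ) such that for every n ≥ n₀ the following holds: if ℱ is a family of subsets of [n] of size m = |ℱ| ≥ 2^{n/k}, then the number of (k+1)-element subsets of ℱ whose members are pairwise comparable (i.e. form a chain F₁ ⊊ F₂ ⊊ ⋯ ⊊ F_{k+1}) is at most γ·binom(m, k+1). -/
/-!
Count chains as monotone tuples. Write `N_r(U)` for the number of monotone `r`-tuples in `ℱ` all of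
whose members contain `U`, and put `m = #ℱ`, `n = #α`. An `(r + 1)`-tuple is an `r`-tuple together
with a common lower bound, so for fixed `s` Jensen's inequality and double counting bound
`N_{r+1}(U) ^ s` by `m ^ (r (s - 1))` times the sum of `N_r(T₁ ∪ ⋯ ∪ T_s)` over the `s`-tuples `T`
in `ℱ` above `U`. Only `2 ^ (s (#W - #U))` tuples of sets containing `U` can have union `W`, so
most unions are large. Raising to the power `s ^ r` and applying Jensen once more, induction on `r`
gives `(N_r(∅) / m ^ r) ^ (s ^ r) ≤ 2 ^ ((s + r) n) / m ^ (r s)`. If `m ≥ 2 ^ (δ n)` with `r δ > 1`,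
the right-hand side tends to `0` for `s` large enough.
-/

open Finset

section Monotone

variable {β : Type*}

/-- The monotone `r`-tuples `c 0 ≤ c 1 ≤ ⋯` with entries in `𝒜`. They stand for the chains of
length `r` in `𝒜`; entries may repeat, so that the recursion on `r` has no side condition. -/
def monotoneTuples [Preorder β] [DecidableLE β] (𝒜 : Finset β) (r : ℕ) : Finset (Fin r → β) :=
  {c ∈ Fintype.piFinset fun _ : Fin r ↦ 𝒜 | Monotone c}

theorem mem_monotoneTuples [Preorder β] [DecidableLE β] {𝒜 : Finset β} {r : ℕ} {c : Fin r → β} :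
    c ∈ monotoneTuples 𝒜 r ↔ (∀ i, c i ∈ 𝒜) ∧ Monotone c := by
  simp [monotoneTuples]

theorem card_monotoneTuples_le_pow [Preorder β] [DecidableLE β] (𝒜 : Finset β) (r : ℕ) :
    #(monotoneTuples 𝒜 r) ≤ #𝒜 ^ r :=
  (card_filter_le _ _).trans_eq (Fintype.card_piFinset_const 𝒜 r)

theorem monotone_finCons [Preorder β] {r : ℕ} {b : β} {c : Fin r → β} :
    Monotone (Fin.cons b c : Fin (r + 1) → β) ↔ (∀ i, b ≤ c i) ∧ Monotone c := by
  simp [Monotone, Fin.forall_fin_succ]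

theorem card_monotoneTuples_succ [Preorder β] [DecidableLE β] (𝒜 : Finset β) (r : ℕ) :
    #(monotoneTuples 𝒜 (r + 1)) = ∑ c ∈ monotoneTuples 𝒜 r, #{b ∈ 𝒜 | ∀ i, b ≤ c i} := by
  rw [← card_sigma]
  refine card_nbij' (fun c ↦ ⟨Fin.tail c, c 0⟩) (fun p ↦ Fin.cons p.2 p.1) ?_ ?_ ?_ ?_
  · intro c hc
    obtain ⟨b, c, rfl⟩ : ∃ b d, c = Fin.cons b d := ⟨c 0, Fin.tail c, (Fin.cons_self_tail c).symm⟩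
    simp_all [mem_monotoneTuples, monotone_finCons, Fin.forall_fin_succ]
  · rintro ⟨c, b⟩ hp
    simp_all [mem_monotoneTuples, monotone_finCons, Fin.forall_fin_succ]
  · intro c _
    simp
  · intro p _
    simp

theorem exists_monotone_image_eq_of_isChain [PartialOrder β] [DecidableEq β] {s : Finset β}
    {r : ℕ} (hs : IsChain (· ≤ ·) (s : Set β)) (hr : #s = r) :
    ∃ c : Fin r → β, Monotone c ∧ univ.image c = s := by
  classical
  let _ : LinearOrder s := hs.linearOrder
  let e : Fin r ≃o s := monoEquivOfFin s (by simpa using hr)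
  refine ⟨fun i ↦ e i, fun i j hij ↦ e.monotone hij, ?_⟩
  ext b
  simpa using ⟨fun ⟨i, hi⟩ ↦ hi ▸ (e i).2, fun hb ↦ ⟨e.symm ⟨b, hb⟩, by simp⟩⟩

theorem card_filter_isChain_le_card_monotoneTuples [PartialOrder β] [DecidableLE β]
    (𝒜 : Finset β) (r : ℕ) [DecidablePred fun 𝒮 : Finset β ↦ ∀ a ∈ 𝒮, ∀ b ∈ 𝒮, a ≤ b ∨ b ≤ a] :
    #{𝒮 ∈ 𝒜.powersetCard r | ∀ a ∈ 𝒮, ∀ b ∈ 𝒮, a ≤ b ∨ b ≤ a} ≤ #(monotoneTuples 𝒜 r) := by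
  classical
  refine card_le_card_of_surjOn (fun c ↦ univ.image c) fun 𝒮 h𝒮 ↦ ?_
  simp only [coe_filter, mem_powersetCard, Set.mem_ofPred_eq] at h𝒮
  obtain ⟨⟨hsub, hcard⟩, hchain⟩ := h𝒮
  obtain ⟨c, hc, rfl⟩ :=
    exists_monotone_image_eq_of_isChain (fun a ha b hb _ ↦ hchain a ha b hb) hcard
  exact ⟨c, mem_monotoneTuples.2 ⟨fun i ↦ hsub (mem_image_of_mem c (mem_univ i)), hc⟩, rfl⟩

end Monotone

section DoubleCounting

theorem sum_card_filter_pow {ι κ : Type*} (A : Finset ι) (B : Finset κ) (R : ι → κ → Prop)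
    [∀ a b, Decidable (R a b)] (s : ℕ) :
    ∑ b ∈ B, #{a ∈ A | R a b} ^ s =
      ∑ T ∈ Fintype.piFinset fun _ : Fin s ↦ A, #{b ∈ B | ∀ j, R (T j) b} := by
  have pow_eq_card_tuples (b : κ) : #{a ∈ A | R a b} ^ s =
      #{T ∈ Fintype.piFinset fun _ : Fin s ↦ A | ∀ j, R (T j) b} := by
    rw [← Fintype.card_piFinset_const]
    congr 1
    ext T
    simp [forall_and]
  simp only [pow_eq_card_tuples]
  exact (sum_card_bipartiteAbove_eq_sum_card_bipartiteBelow fun (T : Fin s → ι) b ↦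
    ∀ j, R (T j) b).symm

variable {β : Type*} [SemilatticeSup β] [OrderBot β] [DecidableLE β]

theorem card_monotoneTuples_succ_pow_le (𝒜 : Finset β) (r t : ℕ) :
    #(monotoneTuples 𝒜 (r + 1)) ^ (t + 1) ≤
      (#𝒜 ^ r) ^ t * ∑ T ∈ Fintype.piFinset fun _ : Fin (t + 1) ↦ 𝒜,
        #(monotoneTuples {b ∈ 𝒜 | univ.sup T ≤ b} r) := by
  have above (T : Fin (t + 1) → β) :
      {c ∈ monotoneTuples 𝒜 r | ∀ j i, T j ≤ c i} =
        monotoneTuples {b ∈ 𝒜 | univ.sup T ≤ b} r := by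
    ext c
    simp only [mem_filter, mem_monotoneTuples, Finset.sup_le_iff, mem_univ, true_imp_iff]
    grind
  calc #(monotoneTuples 𝒜 (r + 1)) ^ (t + 1)
    _ = (∑ c ∈ monotoneTuples 𝒜 r, #{b ∈ 𝒜 | ∀ i, b ≤ c i}) ^ (t + 1) := by
      rw [card_monotoneTuples_succ]
    _ ≤ #(monotoneTuples 𝒜 r) ^ t *
          ∑ c ∈ monotoneTuples 𝒜 r, #{b ∈ 𝒜 | ∀ i, b ≤ c i} ^ (t + 1) :=
      pow_sum_le_card_mul_sum_pow (fun _ _ ↦ Nat.zero_le _) t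
    _ ≤ (#𝒜 ^ r) ^ t * ∑ c ∈ monotoneTuples 𝒜 r, #{b ∈ 𝒜 | ∀ i, b ≤ c i} ^ (t + 1) := by
      gcongr
      exact card_monotoneTuples_le_pow 𝒜 r
    _ = _ := by
      simp only [sum_card_filter_pow, above]

theorem card_monotoneTuples_succ_pow_mul_le (𝒜 : Finset β) (r t a : ℕ) :
    #(monotoneTuples 𝒜 (r + 1)) ^ ((t + 1) * (a + 1)) ≤
      #𝒜 ^ (r * t * (a + 1) + (t + 1) * a) * ∑ T ∈ Fintype.piFinset fun _ : Fin (t + 1) ↦ 𝒜,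
        #(monotoneTuples {b ∈ 𝒜 | univ.sup T ≤ b} r) ^ (a + 1) := by
  rw [pow_mul]
  calc (#(monotoneTuples 𝒜 (r + 1)) ^ (t + 1)) ^ (a + 1)
    _ ≤ ((#𝒜 ^ r) ^ t * ∑ T ∈ Fintype.piFinset fun _ : Fin (t + 1) ↦ 𝒜,
          #(monotoneTuples {b ∈ 𝒜 | univ.sup T ≤ b} r)) ^ (a + 1) :=
      Nat.pow_le_pow_left (card_monotoneTuples_succ_pow_le 𝒜 r t) _
    _ ≤ ((#𝒜 ^ r) ^ t) ^ (a + 1) * ((#𝒜 ^ (t + 1)) ^ a *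
          ∑ T ∈ Fintype.piFinset fun _ : Fin (t + 1) ↦ 𝒜,
            #(monotoneTuples {b ∈ 𝒜 | univ.sup T ≤ b} r) ^ (a + 1)) := by
      rw [mul_pow, ← Fintype.card_piFinset_const 𝒜 (t + 1)]
      gcongr
      exact pow_sum_le_card_mul_sum_pow (fun _ _ ↦ Nat.zero_le _) a
    _ = _ := by ring

end DoubleCounting

section Subsets

variable {α : Type*} [DecidableEq α]

theorem card_Icc_finset_mul_two_pow_le (U W : Finset α) :
    #(Icc U W) * 2 ^ #U ≤ 2 ^ #W := by
  by_cases h : U ⊆ W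
  · rw [card_Icc_finset h, ← pow_add, Nat.sub_add_cancel (card_le_card h)]
  · rw [Icc_eq_empty h]
    simp

variable [Fintype α]

theorem sum_sup_mul_two_pow_le {𝒜 : Finset (Finset α)} {U : Finset α}
    (hU : ∀ F ∈ 𝒜, U ⊆ F) (s : ℕ) (g : Finset α → ℕ) :
    (∑ T ∈ Fintype.piFinset fun _ : Fin s ↦ 𝒜, g (univ.sup T)) * 2 ^ (s * #U) ≤
      ∑ W, 2 ^ (s * #W) * g W := by
  have fiber (W : Finset α) :
      #{T ∈ Fintype.piFinset fun _ : Fin s ↦ 𝒜 | univ.sup T = W} ≤ #(Icc U W) ^ s := by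
    rw [← Fintype.card_piFinset_const]
    refine card_le_card fun T hT ↦ ?_
    obtain ⟨hT𝒜, rfl⟩ := mem_filter.1 hT
    rw [Fintype.mem_piFinset] at hT𝒜 ⊢
    exact fun j ↦ mem_Icc.2 ⟨hU _ (hT𝒜 j), le_sup (f := T) (mem_univ j)⟩
  rw [← sum_fiberwise' _ (fun T : Fin s → Finset α ↦ univ.sup T) g, sum_mul]
  refine sum_le_sum fun W _ ↦ ?_
  calc (∑ T ∈ Fintype.piFinset fun _ : Fin s ↦ 𝒜 with univ.sup T = W, g W) * 2 ^ (s * #U)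
    _ ≤ #(Icc U W) ^ s * g W * 2 ^ (s * #U) := by
      rw [sum_const, smul_eq_mul]
      gcongr
      exact fiber W
    _ = (#(Icc U W) * 2 ^ #U) ^ s * g W := by ring
    _ ≤ (2 ^ #W) ^ s * g W := by
      gcongr
      exact card_Icc_finset_mul_two_pow_le U W
    _ = 2 ^ (s * #W) * g W := by ring

theorem card_monotoneTuples_succ_pow_mul_two_pow_le {𝒜 : Finset (Finset α)} {U : Finset α}
    (hU : ∀ F ∈ 𝒜, U ⊆ F) (r t a : ℕ) :
    #(monotoneTuples 𝒜 (r + 1)) ^ ((t + 1) * (a + 1)) * 2 ^ ((t + 1) * #U) ≤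
      #𝒜 ^ (r * t * (a + 1) + (t + 1) * a) *
        ∑ W, 2 ^ ((t + 1) * #W) * #(monotoneTuples {F ∈ 𝒜 | W ⊆ F} r) ^ (a + 1) :=
  calc #(monotoneTuples 𝒜 (r + 1)) ^ ((t + 1) * (a + 1)) * 2 ^ ((t + 1) * #U)
    _ ≤ #𝒜 ^ (r * t * (a + 1) + (t + 1) * a) *
          (∑ T ∈ Fintype.piFinset fun _ : Fin (t + 1) ↦ 𝒜,
            #(monotoneTuples {F ∈ 𝒜 | univ.sup T ⊆ F} r) ^ (a + 1)) * 2 ^ ((t + 1) * #U) :=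
      Nat.mul_le_mul_right _ (card_monotoneTuples_succ_pow_mul_le 𝒜 r t a)
    _ ≤ _ := by
      rw [mul_assoc]
      gcongr
      exact sum_sup_mul_two_pow_le hU (t + 1)
        fun W ↦ #(monotoneTuples {F ∈ 𝒜 | W ⊆ F} r) ^ (a + 1)

theorem card_monotoneTuples_pow_mul_le (t r : ℕ) {𝒜 : Finset (Finset α)} {U : Finset α} {m : ℕ}
    (hU : ∀ F ∈ 𝒜, U ⊆ F) (hm : #𝒜 ≤ m) :
    #(monotoneTuples 𝒜 r) ^ (t + 1) ^ r * m ^ (r * (t + 1)) * 2 ^ ((t + 1) * #U) ≤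
      m ^ (r * (t + 1) ^ r) * 2 ^ ((t + 1 + r) * Fintype.card α) := by
  induction r generalizing 𝒜 U with
  | zero =>
    have h₁ : #(monotoneTuples 𝒜 0) ≤ 1 := by simpa using card_monotoneTuples_le_pow 𝒜 0
    have h₂ : #U ≤ Fintype.card α := card_le_univ U
    simpa using Nat.mul_le_mul h₁ (Nat.pow_le_pow_right two_pos (Nat.mul_le_mul_left (t + 1) h₂))
  | succ r ih =>
    obtain ⟨a, ha⟩ : ∃ a, (t + 1) ^ r = a + 1 :=
      Nat.exists_eq_add_one_of_ne_zero (by positivity)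
    rw [pow_succ' (t + 1), ha]
    rw [ha] at ih
    set N : Finset α → ℕ := fun W ↦ #(monotoneTuples {F ∈ 𝒜 | W ⊆ F} r)
    have inductive_bound (W : Finset α) :
        N W ^ (a + 1) * m ^ (r * (t + 1)) * 2 ^ ((t + 1) * #W) ≤
          m ^ (r * (a + 1)) * 2 ^ ((t + 1 + r) * Fintype.card α) :=
      ih (fun F hF ↦ (mem_filter.1 hF).2) ((card_filter_le _ _).trans hm)
    rw [mul_right_comm]
    calc #(monotoneTuples 𝒜 (r + 1)) ^ ((t + 1) * (a + 1)) * 2 ^ ((t + 1) * #U) *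
          m ^ ((r + 1) * (t + 1))
      _ ≤ m ^ (r * t * (a + 1) + (t + 1) * a) * (∑ W, 2 ^ ((t + 1) * #W) * N W ^ (a + 1)) *
            m ^ ((r + 1) * (t + 1)) := by
        grw [card_monotoneTuples_succ_pow_mul_two_pow_le hU, hm]
      _ = m ^ ((r * t + t + 1) * (a + 1)) *
            ∑ W, N W ^ (a + 1) * m ^ (r * (t + 1)) * 2 ^ ((t + 1) * #W) := by
        simp only [mul_sum, sum_mul]
        refine sum_congr rfl fun W _ ↦ ?_
        ring
      _ ≤ m ^ ((r * t + t + 1) * (a + 1)) *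
            ∑ _W : Finset α, m ^ (r * (a + 1)) * 2 ^ ((t + 1 + r) * Fintype.card α) :=
        Nat.mul_le_mul_left _ (sum_le_sum fun W _ ↦ inductive_bound W)
      _ = m ^ ((r + 1) * ((t + 1) * (a + 1))) * 2 ^ ((t + 1 + (r + 1)) * Fintype.card α) := by
        rw [sum_const, card_univ, Fintype.card_finset, smul_eq_mul]
        ring

theorem card_monotoneTuples_pow_mul_rpow_le (t r : ℕ) {δ : ℝ} {ℱ : Finset (Finset α)}
    (hℱ : (2 : ℝ) ^ (δ * Fintype.card α) ≤ #ℱ) :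
    (#(monotoneTuples ℱ r) : ℝ) ^ (t + 1) ^ r *
        2 ^ (((t + 1) * (r * δ - 1) - r) * Fintype.card α) ≤
      ((#ℱ : ℝ) ^ r) ^ (t + 1) ^ r := by
  set n := Fintype.card α
  set N := #(monotoneTuples ℱ r)
  have counting : (N : ℝ) ^ (t + 1) ^ r * (#ℱ : ℝ) ^ (r * (t + 1)) ≤
      (#ℱ : ℝ) ^ (r * (t + 1) ^ r) * 2 ^ ((t + 1 + r) * n) := by
    have h := card_monotoneTuples_pow_mul_le t r (fun F _ ↦ empty_subset F) (le_refl #ℱ)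
    rw [card_empty, mul_zero, pow_zero, mul_one] at h
    exact_mod_cast h
  have exponents : (2 : ℝ) ^ (((t + 1) * (r * δ - 1) - r) * n) * 2 ^ ((t + 1 + r) * n) =
      ((2 : ℝ) ^ (δ * n)) ^ (r * (t + 1)) := by
    rw [← Real.rpow_natCast, ← Real.rpow_natCast, ← Real.rpow_mul two_pos.le,
      ← Real.rpow_add two_pos]
    congr 1
    push_cast
    ring
  refine le_of_mul_le_mul_right ?_ (show (0 : ℝ) < 2 ^ ((t + 1 + r) * n) by positivity)
  calc (N : ℝ) ^ (t + 1) ^ r * 2 ^ (((t + 1) * (r * δ - 1) - r) * n) * 2 ^ ((t + 1 + r) * n)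
    _ = (N : ℝ) ^ (t + 1) ^ r * ((2 : ℝ) ^ (δ * n)) ^ (r * (t + 1)) := by
      rw [mul_assoc, exponents]
    _ ≤ (N : ℝ) ^ (t + 1) ^ r * (#ℱ : ℝ) ^ (r * (t + 1)) := by gcongr
    _ ≤ (#ℱ : ℝ) ^ (r * (t + 1) ^ r) * 2 ^ ((t + 1 + r) * n) := counting
    _ = ((#ℱ : ℝ) ^ r) ^ (t + 1) ^ r * 2 ^ ((t + 1 + r) * n) := by rw [pow_mul]

end Subsets

theorem exists_forall_card_monotoneTuples_le {r : ℕ} {δ : ℝ} (hδ : 1 < r * δ) {η : ℝ}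
    (hη : 0 < η) :
    ∃ n₀ : ℕ, ∀ (α : Type*) [Fintype α] [DecidableEq α], n₀ ≤ Fintype.card α →
      ∀ ℱ : Finset (Finset α), (2 : ℝ) ^ (δ * Fintype.card α) ≤ #ℱ →
        (#(monotoneTuples ℱ r) : ℝ) ≤ η * (#ℱ : ℝ) ^ r := by
  obtain ⟨t, ht⟩ : ∃ t : ℕ, r / (r * δ - 1) < t := exists_nat_gt _
  set ε : ℝ := (t + 1) * (r * δ - 1) - r
  have hε : 0 < ε := by
    rw [div_lt_iff₀ (by linarith)] at ht
    simp only [ε]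
    linarith
  have large : ∀ᶠ n : ℕ in Filter.atTop, (η ^ (t + 1) ^ r)⁻¹ ≤ (2 : ℝ) ^ (ε * n) :=
    ((tendsto_rpow_atTop_of_base_gt_one 2 one_lt_two).comp
      (tendsto_natCast_atTop_atTop.const_mul_atTop hε)).eventually_ge_atTop _
  obtain ⟨n₀, hn₀⟩ := Filter.eventually_atTop.1 large
  refine ⟨n₀, fun α _ _ hα ℱ hℱ ↦ ?_⟩
  refine le_of_pow_le_pow_left₀ (n := (t + 1) ^ r) (by positivity) (by positivity) ?_
  rw [mul_pow, ← inv_mul_le_iff₀ (by positivity), mul_comm]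
  calc (#(monotoneTuples ℱ r) : ℝ) ^ (t + 1) ^ r * (η ^ (t + 1) ^ r)⁻¹
    _ ≤ (#(monotoneTuples ℱ r) : ℝ) ^ (t + 1) ^ r * 2 ^ (ε * Fintype.card α) := by
      gcongr
      exact hn₀ _ hα
    _ ≤ ((#ℱ : ℝ) ^ r) ^ (t + 1) ^ r := card_monotoneTuples_pow_mul_rpow_le t r hℱ

theorem pow_le_pow_mul_factorial_mul_choose {m r : ℕ} (h : r ≤ m) :
    m ^ r ≤ r ^ r * r.factorial * m.choose r := by
  obtain rfl | hr := r.eq_zero_or_pos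
  · simp
  have linear : m ≤ r * (m + 1 - r) := by
    obtain ⟨e, rfl⟩ := Nat.exists_eq_add_of_le h
    rw [show r + e + 1 - r = e + 1 by lia]
    nlinarith
  calc m ^ r
    _ ≤ (r * (m + 1 - r)) ^ r := Nat.pow_le_pow_left linear r
    _ = r ^ r * (m + 1 - r) ^ r := mul_pow ..
    _ ≤ r ^ r * m.descFactorial r := Nat.mul_le_mul_left _ (Nat.pow_sub_le_descFactorial m r)
    _ = r ^ r * r.factorial * m.choose r := by
      rw [Nat.descFactorial_eq_factorial_mul_choose, mul_assoc]

theorem stmt10_general {r : ℕ} {δ : ℝ} (hδ : 1 < r * δ) {γ : ℝ} (hγ : 0 < γ) :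
    ∃ n₀ : ℕ, ∀ (α : Type*) [Fintype α] [DecidableEq α], n₀ ≤ Fintype.card α →
      ∀ ℱ : Finset (Finset α), (2 : ℝ) ^ (δ * Fintype.card α) ≤ #ℱ →
        (#{𝒮 ∈ ℱ.powersetCard r | ∀ A ∈ 𝒮, ∀ B ∈ 𝒮, A ⊆ B ∨ B ⊆ A} : ℝ) ≤
          γ * (#ℱ).choose r := by
  set K : ℝ := r ^ r * r.factorial
  have hK : 0 < K := mul_pos (mod_cast Nat.pow_self_pos) (mod_cast r.factorial_pos)
  obtain ⟨n₀, hn₀⟩ := exists_forall_card_monotoneTuples_le hδ (div_pos hγ hK)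
  refine ⟨n₀, fun α _ _ hα ℱ hℱ ↦ ?_⟩
  obtain hlt | hle := lt_or_ge #ℱ r
  · simp only [powersetCard_eq_empty.2 hlt, filter_empty, card_empty, Nat.cast_zero]
    positivity
  calc (#{𝒮 ∈ ℱ.powersetCard r | ∀ A ∈ 𝒮, ∀ B ∈ 𝒮, A ⊆ B ∨ B ⊆ A} : ℝ)
    _ ≤ #(monotoneTuples ℱ r) := Nat.cast_le.2 (card_filter_isChain_le_card_monotoneTuples ℱ r)
    _ ≤ γ / K * (#ℱ : ℝ) ^ r := hn₀ α hα ℱ hℱ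
    _ ≤ γ / K * (K * (#ℱ).choose r) := by
      gcongr
      simp only [K]
      exact mod_cast pow_le_pow_mul_factorial_mul_choose hle
    _ = γ * (#ℱ).choose r := by rw [← mul_assoc, div_mul_cancel₀ γ hK.ne']

theorem stmt10 (k : ℕ) (hk : 2 ≤ k) (γ : ℝ) (hγ : 0 < γ) :
    ∃ n₀ : ℕ, ∀ n ≥ n₀,
      ∀ ℱ : Finset (Finset (Fin n)),
        (2 : ℝ) ^ ((n : ℝ) / k) ≤ (ℱ.card : ℝ) →
        (((ℱ.powersetCard (k + 1)).filter
            (fun 𝒮 => ∀ A ∈ 𝒮, ∀ B ∈ 𝒮, A ⊆ B ∨ B ⊆ A)).card : ℝ)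
          ≤ γ * (ℱ.card.choose (k + 1) : ℝ) := by
  obtain ⟨n₀, h⟩ := stmt10_general (r := k + 1) (δ := 1 / k) (by field_simp; simp) hγ
  exact ⟨n₀, fun n hn ℱ hℱ ↦ h (Fin n) (by simpa) ℱ (by simpa [div_eq_inv_mul] using hℱ)⟩
end

section
/- For all integers r ≥ 2 and ℓ ≥ 1 and every real γ > 0, there is a δ₁ = δ₁(r, ℓ, γ) > 0 such that for all sufficiently large n the following holds: every graph G on n vertices containing at least γ·binom(n,r) copies of K_r contains at least δ₁·binom(n, rℓ) copies of K_r(ℓ). -/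
open SimpleGraph

/-- `copyCount G H` is the number of copies of `H` in `G`, i.e. the number of subgraphs of
`G` isomorphic to `H`. -/
noncomputable def copyCount {V W : Type*} (G : SimpleGraph V) (H : SimpleGraph W) : ℕ :=
  Nat.card {G' : G.Subgraph // Nonempty (G'.coe ≃g H)}

/-!
Erdős's argument, run with homomorphism densities instead of copies. Cloning one vertex of `H` turns
the conditional probability that a random vertex completes a partial map to a homomorphism into a
power of it, so by Jensen's inequality the density drops at most to that power. Cloning the vertices
one after the other gives `t(H, G) ^ N ≤ t(H(κ), G)` for the blow-up `H(κ)`, where `N` is the number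
of ways to choose one clone of each vertex. On `n` vertices the two densities are the
normalized numbers of copies up to constant factors and an error `o(1)`, because all but `o(n ^ k)`
of the maps from a `k`-element set are injective.
-/

open Finset hiding card
open Fintype (card)
open scoped BigOperators Nat

section Expect

variable {K : Type*} [Field K] [LinearOrder K] [IsStrictOrderedRing K]

lemma expect_pow_le_expect_pow {ι : Type*} [Fintype ι] [Nonempty ι] {f : ι → K}
    (hf : ∀ i, 0 ≤ f i) (n : ℕ) : (𝔼 i, f i) ^ n ≤ 𝔼 i, f i ^ n := by
  have weights_sum : ∑ _i : ι, (card ι : K)⁻¹ = 1 := by simp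
  simpa only [Fintype.expect_eq_sum_div_card, div_eq_inv_mul, mul_sum, smul_eq_mul] using
    (convexOn_pow n).map_sum_le (t := univ) (w := fun _ => (card ι : K)⁻¹) (p := f)
      (fun _ _ => by positivity) weights_sum (fun i _ => hf i)

lemma expect_pow_card {V κ : Type*} [Fintype V] [Fintype κ] [DecidableEq κ] (f : V → K) :
    (𝔼 v, f v) ^ card κ = 𝔼 y : κ → V, ∏ j, f (y j) := by
  simp only [Fintype.expect_eq_sum_div_card, div_pow, Fintype.card_fun, Nat.cast_pow]
  rw [← Finset.card_univ (α := κ), ← Finset.prod_const, Finset.prod_univ_sum,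
    Fintype.piFinset_univ]

lemma expect_expect_pow_card_le {X V κ : Type*} [Fintype X] [Nonempty X] [Fintype V]
    [Fintype κ] [DecidableEq κ] {f : X → V → K} (hf : ∀ x v, 0 ≤ f x v) :
    (𝔼 x, 𝔼 v, f x v) ^ card κ ≤ 𝔼 y : κ → V, 𝔼 x, ∏ j, f x (y j) :=
  calc
    (𝔼 x, 𝔼 v, f x v) ^ card κ ≤ 𝔼 x, (𝔼 v, f x v) ^ card κ :=
      expect_pow_le_expect_pow (fun x => expect_nonneg fun v _ => hf x v) _
    _ = 𝔼 x, 𝔼 y : κ → V, ∏ j, f x (y j) := by simp only [expect_pow_card]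
    _ = 𝔼 y : κ → V, 𝔼 x, ∏ j, f x (y j) := expect_comm ..

lemma expect_piFinSucc {r : ℕ} {V : Fin (r + 1) → Type*} [∀ i, Fintype (V i)]
    (f : (∀ i, V i) → K) :
    𝔼 x, f x = 𝔼 x' : ∀ i, V (Fin.succ i), 𝔼 v, f (Fin.cons v x') := by
  rw [Finset.expect_comm, ← Finset.expect_product', univ_product_univ]
  exact (Fintype.expect_equiv (Fin.consEquiv V) _ _ fun _ => rfl).symm

lemma prod_piFinSucc {M : Type*} [CommMonoid M] {r : ℕ} {κ : Fin (r + 1) → Type*}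
    [∀ i, Fintype (κ i)] (f : (∀ i, κ i) → M) :
    ∏ s, f s = ∏ s' : ∀ i, κ (Fin.succ i), ∏ j, f (Fin.cons j s') := by
  rw [Finset.prod_comm, ← Finset.prod_product', univ_product_univ]
  exact (Fintype.prod_equiv (Fin.consEquiv κ) _ _ fun _ => rfl).symm

lemma expect_pow_card_pi_fin_le {r : ℕ} (V κ : Fin r → Type*) [∀ i, Fintype (V i)]
    [∀ i, Nonempty (V i)] [∀ i, Fintype (κ i)] [∀ i, DecidableEq (κ i)]
    {f : (∀ i, V i) → K} (hf : ∀ x, 0 ≤ f x) :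
    (𝔼 x, f x) ^ card (∀ i, κ i) ≤
      𝔼 y : ∀ i, κ i → V i, ∏ s : ∀ i, κ i, f fun i => y i (s i) := by
  induction r with
  | zero => simpa using (congrArg f (Subsingleton.elim _ _)).le
  | succ r ih =>
    let g (z : κ 0 → V 0) (x : ∀ i : Fin r, V i.succ) : K := ∏ j, f (Fin.cons (z j) x)
    have hg (z x) : 0 ≤ g z x := prod_nonneg fun j _ => hf _
    calc
      (𝔼 x, f x) ^ card (∀ i, κ i)
        = ((𝔼 x : ∀ i : Fin r, V i.succ, 𝔼 v, f (Fin.cons v x)) ^ card (κ 0)) ^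
            card (∀ i : Fin r, κ i.succ) := by
        rw [expect_piFinSucc, Fintype.card_pi, Fin.prod_univ_succ, ← Fintype.card_pi, pow_mul]
      _ ≤ (𝔼 z, 𝔼 x, g z x) ^ card (∀ i : Fin r, κ i.succ) := by
        gcongr
        · exact pow_nonneg (expect_nonneg fun x _ => expect_nonneg fun v _ => hf _) _
        · exact expect_expect_pow_card_le fun x v => hf _
      _ ≤ 𝔼 z, (𝔼 x, g z x) ^ card (∀ i : Fin r, κ i.succ) :=
        expect_pow_le_expect_pow (fun z => expect_nonneg fun x _ => hg z x) _
      _ ≤ 𝔼 z, 𝔼 y : ∀ i : Fin r, κ i.succ → V i.succ,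
            ∏ s : ∀ i : Fin r, κ i.succ, g z fun i => y i (s i) :=
        expect_le_expect fun z _ => ih _ _ (hg z)
      _ = 𝔼 y : ∀ i, κ i → V i, ∏ s : ∀ i, κ i, f fun i => y i (s i) := by
        rw [expect_piFinSucc, expect_comm]
        refine expect_congr rfl fun y _ => expect_congr rfl fun z _ => ?_
        rw [prod_piFinSucc]
        refine prod_congr rfl fun s _ => prod_congr rfl fun j _ => congrArg f ?_
        funext i
        cases i using Fin.cases <;> simp only [Fin.cons_zero, Fin.cons_succ]

theorem expect_pow_card_pi_le {ι : Type*} [Fintype ι] [DecidableEq ι] (V κ : ι → Type*)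
    [∀ i, Fintype (V i)] [∀ i, Nonempty (V i)] [∀ i, Fintype (κ i)] [∀ i, DecidableEq (κ i)]
    {f : (∀ i, V i) → K} (hf : ∀ x, 0 ≤ f x) :
    (𝔼 x, f x) ^ card (∀ i, κ i) ≤
      𝔼 y : ∀ i, κ i → V i, ∏ s : ∀ i, κ i, f fun i => y i (s i) := by
  let e := (Fintype.equivFin ι).symm
  convert expect_pow_card_pi_fin_le (fun k => V (e k)) (fun k => κ (e k))
    (f := fun x => f (Equiv.piCongrLeft V e x)) (fun x => hf _) using 1
  · rw [Fintype.card_congr (Equiv.piCongrLeft κ e),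
      Fintype.expect_equiv (Equiv.piCongrLeft V e) _ f fun _ => rfl]
  · refine (Fintype.expect_equiv (Equiv.piCongrLeft (fun i => κ i → V i) e) _ _ fun y =>
      Fintype.prod_equiv (Equiv.piCongrLeft κ e) _ _ fun s => congrArg f ?_).symm
    funext i
    obtain ⟨k, rfl⟩ := e.surjective i
    simp only [Equiv.piCongrLeft_apply_apply]

end Expect

section HomDensity

variable {V W : Type*} [Fintype V] [Fintype W]

/-- The homomorphism density `t(H, G)`: the probability that a uniformly random map from the
vertices of `H` to the vertices of `G` is a graph homomorphism. -/
noncomputable def homDensity (H : SimpleGraph W) (G : SimpleGraph V) : ℝ :=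
  Nat.card (H →g G) / (card V : ℝ) ^ card W

/-- The blow-up of `H` in which each vertex `w` is replaced by an independent set `κ w`, and each
edge by a complete bipartite graph. In particular `blowUp ⊤ κ` is `completeMultipartiteGraph κ`. -/
def blowUp {W : Type*} (H : SimpleGraph W) (κ : W → Type*) : SimpleGraph (Σ w, κ w) :=
  H.comap Sigma.fst

lemma homDensity_eq_expect [DecidableEq W] (H : SimpleGraph W) (G : SimpleGraph V)
    [DecidablePred fun x : W → V => ∀ i j, H.Adj i j → G.Adj (x i) (x j)] :
    homDensity H G =
      𝔼 x : W → V, if ∀ i j, H.Adj i j → G.Adj (x i) (x j) then (1 : ℝ) else 0 := by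
  let homEquiv : (H →g G) ≃ {x : W → V // ∀ i j, H.Adj i j → G.Adj (x i) (x j)} :=
    { toFun := fun f => ⟨f, fun _ _ => f.map_adj⟩
      invFun := fun x => ⟨x.1, fun {i j} => x.2 i j⟩ }
  rw [homDensity, Fintype.expect_eq_sum_div_card, sum_boole, Nat.card_congr homEquiv,
    Nat.card_eq_fintype_card, Fintype.card_subtype, Fintype.card_fun, Nat.cast_pow]

lemma blowUp_map_adj_iff {W V : Type*} {H : SimpleGraph W} {G : SimpleGraph V} {κ : W → Type*}
    [∀ w, Nonempty (κ w)] {y : ∀ w, κ w → V} :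
    (∀ a b, (blowUp H κ).Adj a b → G.Adj (y a.1 a.2) (y b.1 b.2)) ↔
      ∀ s : ∀ w, κ w, ∀ i j, H.Adj i j → G.Adj (y i (s i)) (y j (s j)) := by
  classical
  refine ⟨fun h s i j hij => h ⟨i, s i⟩ ⟨j, s j⟩ hij, fun h ⟨i, a⟩ ⟨j, b⟩ hij => ?_⟩
  have hne : i ≠ j := fun h => H.irrefl (h ▸ hij : H.Adj j j)
  let s : ∀ w, κ w := Function.update (Function.update (fun _ => Classical.arbitrary _) i a) j b
  simpa [s, hne] using h s i j hij

theorem homDensity_pow_le_homDensity_blowUp [Nonempty V] [DecidableEq W] (H : SimpleGraph W)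
    (G : SimpleGraph V) (κ : W → Type*) [∀ w, Fintype (κ w)] [∀ w, Nonempty (κ w)] :
    homDensity H G ^ card (∀ w, κ w) ≤ homDensity (blowUp H κ) G := by
  classical
  let hom (x : W → V) : Prop := ∀ i j, H.Adj i j → G.Adj (x i) (x j)
  calc
    homDensity H G ^ card (∀ w, κ w)
      = (𝔼 x, if hom x then (1 : ℝ) else 0) ^ card (∀ w, κ w) := by rw [homDensity_eq_expect]
    _ ≤ 𝔼 y : ∀ w, κ w → V, ∏ s : ∀ w, κ w, if hom fun w => y w (s w) then (1 : ℝ) else 0 :=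
      expect_pow_card_pi_le (fun _ => V) κ fun x => by positivity
    _ = 𝔼 y : ∀ w, κ w → V, if ∀ s : ∀ w, κ w, hom fun w => y w (s w) then (1 : ℝ) else 0 := by
      refine expect_congr rfl fun y _ => ?_
      rw [Fintype.prod_ite_zero, prod_const_one]
    _ = homDensity (blowUp H κ) G := by
      rw [homDensity_eq_expect]
      refine (Fintype.expect_equiv (Equiv.piCurry fun _ _ => V) _ _ fun x => ?_).symm
      exact if_congr (blowUp_map_adj_iff (y := Sigma.curry x)) rfl rfl

end HomDensity

section CopyCount

variable {V W : Type*}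

lemma copyCount_eq_card_range_toSubgraph (G : SimpleGraph V) (H : SimpleGraph W) :
    _root_.copyCount G H =
      Nat.card (Set.range (Copy.toSubgraph : H.Copy G → G.Subgraph)) := by
  rw [Copy.range_toSubgraph]
  exact Nat.card_congr (Equiv.subtypeEquivRight fun G' => ⟨.map .symm, .map .symm⟩)

lemma copyCount_le_card_hom [Finite V] [Finite W] (G : SimpleGraph V)
    (H : SimpleGraph W) :
    _root_.copyCount G H ≤ Nat.card (H →g G) := by
  have : Finite (H.Copy G) := DFunLike.finite _
  calc
    _root_.copyCount G H ≤ Nat.card (H.Copy G) := by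
      rw [copyCount_eq_card_range_toSubgraph]
      exact Finite.card_range_le _
    _ ≤ Nat.card (H →g G) :=
      Nat.card_le_card_of_injective Copy.toHom fun f g h =>
        DFunLike.coe_injective (congrArg (fun x : H →g G => (x : W → V)) h)

lemma card_copy_le [Finite V] [Fintype W] (G : SimpleGraph V) (H : SimpleGraph W) :
    Nat.card (H.Copy G) ≤ (card W)! * _root_.copyCount G H := by
  classical
  let S := Set.range (Copy.toSubgraph : H.Copy G → G.Subgraph)
  have model (G' : S) : Nonempty (H ≃g G'.1.coe) := by
    obtain ⟨_, f, rfl⟩ := G'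
    exact ⟨f.isoToSubgraph⟩
  let iso (G' : S) : H ≃g G'.1.coe := (model G').some
  let image (f : H.Copy G) : S := ⟨f.toSubgraph, f, rfl⟩
  let relabel (f : H.Copy G) : Equiv.Perm W × S :=
    (f.isoToSubgraph.toEquiv.trans (iso (image f)).symm.toEquiv, image f)
  let recover (p : Equiv.Perm W × S) (w : W) : V := iso p.2 (p.1 w)
  have recover_relabel : recover ∘ relabel = DFunLike.coe := by
    funext f w
    exact congrArg Subtype.val ((iso (image f)).apply_symm_apply (f.isoToSubgraph w))
  have relabel_injective : Function.Injective relabel :=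
    .of_comp (f := recover) (recover_relabel ▸ DFunLike.coe_injective)
  calc
    Nat.card (H.Copy G) ≤ Nat.card (Equiv.Perm W × S) :=
      Nat.card_le_card_of_injective relabel relabel_injective
    _ = (card W)! * _root_.copyCount G H := by
      rw [Nat.card_prod, Nat.card_perm, Nat.card_eq_fintype_card,
        copyCount_eq_card_range_toSubgraph]

lemma card_hom_add_descFactorial_le [Fintype V] [Fintype W] (G : SimpleGraph V)
    (H : SimpleGraph W) :
    Nat.card (H →g G) + (card V).descFactorial (card W) ≤
      Nat.card (H.Copy G) + card V ^ card W := by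
  classical
  have : Finite (H.Copy G) := DFunLike.finite _
  let toCopyOrMap (f : H →g G) : H.Copy G ⊕ {x : W → V // ¬ Function.Injective x} :=
    if hf : Function.Injective f then .inl (f.toCopy hf) else .inr ⟨f, hf⟩
  let toMap : H.Copy G ⊕ {x : W → V // ¬ Function.Injective x} → W → V :=
    Sum.elim DFunLike.coe Subtype.val
  have toMap_toCopyOrMap : toMap ∘ toCopyOrMap = DFunLike.coe := by
    funext f
    by_cases hf : Function.Injective f <;> simp [toMap, toCopyOrMap, hf]
  have toCopyOrMap_injective : Function.Injective toCopyOrMap :=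
    .of_comp (f := toMap) (toMap_toCopyOrMap ▸ DFunLike.coe_injective)
  have injective_add_not : (card V).descFactorial (card W) +
      card {x : W → V // ¬ Function.Injective x} = card V ^ card W := by
    rw [← Fintype.card_embedding_eq, ← Fintype.card_fun,
      ← Fintype.card_congr (Equiv.subtypeInjectiveEquivEmbedding W V), Fintype.card_subtype_compl]
    exact Nat.add_sub_cancel' (Fintype.card_subtype_le _)
  have homs_le := Nat.card_le_card_of_injective toCopyOrMap toCopyOrMap_injective
  rw [Nat.card_sum, Nat.card_eq_fintype_card (α := Subtype _)] at homs_le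
  lia

end CopyCount

section Supersaturation

lemma exists_mul_pow_le_descFactorial (k : ℕ) {c : ℝ} (hc : c < 1) :
    ∃ n₀ : ℕ, ∀ n ≥ n₀, c * (n : ℝ) ^ k ≤ n.descFactorial k := by
  refine Filter.eventually_atTop.1 ?_
  filter_upwards [(isEquivalent_descFactorial k).isLittleO.def (sub_pos.2 hc)] with n hn
  rw [Pi.sub_apply, Real.norm_eq_abs, Real.norm_of_nonneg (by positivity)] at hn
  linarith [neg_le_of_abs_le hn]

variable {V W : Type*} [Fintype V] [Nonempty V] [Fintype W] {G : SimpleGraph V}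
  {H : SimpleGraph W}

lemma mul_div_factorial_le_homDensity {γ c : ℝ} (hγ : 0 ≤ γ)
    (hc : c * (card V : ℝ) ^ card W ≤ (card V).descFactorial (card W))
    (hG : γ * (card V).choose (card W) ≤ _root_.copyCount G H) :
    γ * c / (card W)! ≤ homDensity H G := by
  have copies_le_homs : (_root_.copyCount G H : ℝ) ≤ Nat.card (H →g G) :=
    mod_cast copyCount_le_card_hom G H
  rw [Nat.descFactorial_eq_factorial_mul_choose, Nat.cast_mul] at hc
  rw [homDensity, div_le_div_iff₀ (by positivity) (by positivity)]
  calc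
    γ * c * (card V : ℝ) ^ card W = γ * (c * (card V : ℝ) ^ card W) := mul_assoc ..
    _ ≤ γ * ((card W)! * (card V).choose (card W)) := by gcongr
    _ = γ * (card V).choose (card W) * (card W)! := by ring
    _ ≤ Nat.card (H →g G) * (card W)! := by gcongr; exact hG.trans copies_le_homs

-- At most `(1 - c) * |V| ^ |W|` of the homomorphisms counted by `homDensity` are not injective.
lemma homDensity_add_sub_one_mul_choose_le_copyCount {c : ℝ}
    (hc : c * (card V : ℝ) ^ card W ≤ (card V).descFactorial (card W)) :
    (homDensity H G + c - 1) * (card V).choose (card W) ≤ _root_.copyCount G H := by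
  obtain ht | ht := le_total (homDensity H G + c - 1) 0
  · exact (mul_nonpos_of_nonpos_of_nonneg ht (Nat.cast_nonneg _)).trans (Nat.cast_nonneg _)
  have homs_eq : homDensity H G * (card V : ℝ) ^ card W = Nat.card (H →g G) :=
    div_mul_cancel₀ _ (by positivity)
  have homs_le : (Nat.card (H →g G) + (card V).descFactorial (card W) : ℝ) ≤
      Nat.card (H.Copy G) + (card V : ℝ) ^ card W :=
    mod_cast card_hom_add_descFactorial_le G H
  have labelled_le : (Nat.card (H.Copy G) : ℝ) ≤ (card W)! * _root_.copyCount G H :=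
    mod_cast card_copy_le G H
  have factorial_mul_choose_le : ((card W)! * (card V).choose (card W) : ℝ) ≤
      (card V : ℝ) ^ card W := by
    exact_mod_cast Nat.descFactorial_eq_factorial_mul_choose _ _ ▸ Nat.descFactorial_le_pow _ _
  refine le_of_mul_le_mul_left ?_ (by positivity : (0 : ℝ) < (card W)!)
  calc
    ((card W)! : ℝ) * ((homDensity H G + c - 1) * (card V).choose (card W))
      = (homDensity H G + c - 1) * ((card W)! * (card V).choose (card W)) := by ring
    _ ≤ (homDensity H G + c - 1) * (card V : ℝ) ^ card W := by gcongr
    _ ≤ Nat.card (H.Copy G) := by linarith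
    _ ≤ (card W)! * _root_.copyCount G H := labelled_le

end Supersaturation

theorem stmt11_general {W : Type*} [Fintype W] (H : SimpleGraph W) (κ : W → Type*)
    [∀ w, Fintype (κ w)] [∀ w, Nonempty (κ w)] {γ : ℝ} (hγ : 0 < γ) :
    ∃ δ : ℝ, 0 < δ ∧ ∃ n₀ : ℕ, ∀ (V : Type*) [Fintype V], n₀ ≤ card V → ∀ G : SimpleGraph V,
      γ * (card V).choose (card W) ≤ _root_.copyCount G H →
      δ * (card V).choose (card (Σ w, κ w)) ≤ _root_.copyCount G (blowUp H κ) := by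
  classical
  let ε : ℝ := (γ * (1 / 2) / (card W)!) ^ card (∀ w, κ w)
  have hε : 0 < ε := by positivity
  obtain ⟨n₁, hn₁⟩ := exists_mul_pow_le_descFactorial (card W) (c := 1 / 2) (by norm_num)
  obtain ⟨n₂, hn₂⟩ := exists_mul_pow_le_descFactorial (card (Σ w, κ w)) (c := 1 - ε / 2)
    (by linarith)
  refine ⟨ε / 2, half_pos hε, max 1 (max n₁ n₂), fun V _ hV G hG => ?_⟩
  simp only [max_le_iff] at hV
  obtain ⟨hV₀, hV₁, hV₂⟩ := hV
  have : Nonempty V := Fintype.card_pos_iff.1 hV₀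
  have density_blowUp : ε ≤ homDensity (blowUp H κ) G :=
    (pow_le_pow_left₀ (by positivity)
      (mul_div_factorial_le_homDensity hγ.le (hn₁ _ hV₁) hG) _).trans
      (homDensity_pow_le_homDensity_blowUp H G κ)
  calc
    ε / 2 * (card V).choose (card (Σ w, κ w))
      ≤ (homDensity (blowUp H κ) G + (1 - ε / 2) - 1) * (card V).choose (card (Σ w, κ w)) := by
      gcongr
      linarith
    _ ≤ _root_.copyCount G (blowUp H κ) :=
      homDensity_add_sub_one_mul_choose_le_copyCount (hn₂ _ hV₂)

theorem stmt11 (r ℓ : ℕ) (hr : 2 ≤ r) (hℓ : 1 ≤ ℓ) (γ : ℝ) (hγ : 0 < γ) :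
    ∃ δ₁ : ℝ, 0 < δ₁ ∧ ∃ n₀ : ℕ, ∀ n ≥ n₀, ∀ G : SimpleGraph (Fin n),
      γ * (n.choose r : ℝ) ≤ (_root_.copyCount G (completeGraph (Fin r)) : ℝ) →
      δ₁ * (n.choose (r * ℓ) : ℝ) ≤
        (_root_.copyCount G (completeMultipartiteGraph (fun _ : Fin r => Fin ℓ)) : ℝ) := by
  have : Nonempty (Fin ℓ) := ⟨⟨0, hℓ⟩⟩
  obtain ⟨δ, hδ, n₀, h⟩ := stmt11_general (completeGraph (Fin r)) (fun _ => Fin ℓ) hγ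
  exact ⟨δ, hδ, n₀, fun n hn G hG => by simpa using! h (Fin n) (by simpa) G (by simpa)⟩
end

section
/- Let n be a positive integer and let k be an integer with n/3 + √(2n·ln 2) ≤ k ≤ n/2. If M_{k−1} ≤ m ≤ M_k, then every family ℱ of m subsets of [n] satisfying c(ℱ) = c(n,m) (i.e. maximising the number of comparable pairs among families of m subsets of [n]) satisfies ℋ_{k−1} ⊆ ℱ ⊆ ℋ_k. -/
open Finset

/-- `maxComp n m` is `c(n,m)`, the maximum number of comparable pairs over all families of
`m` subsets of `[n]`. -/
def maxComp (n m : ℕ) : ℕ :=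
  ((Finset.univ : Finset (Finset (Fin n))).powersetCard m).sup compCount

/-- `Hfam n k = ℋ_k` is the family of subsets of `[n]` of size at most `k` or at least `n - k`. -/
def Hfam (n k : ℕ) : Finset (Finset (Fin n)) :=
  Finset.univ.filter (fun F => F.card ≤ k ∨ n - k ≤ F.card)

/-- `Mnum n k = M_k = |ℋ_k|`. -/
def Mnum (n k : ℕ) : ℕ := (Hfam n k).card

/-!
Call the number of members of `𝒢` comparable to `S` the degree of `S` in `𝒢`. An `a`-set has
`2 ^ a + 2 ^ (n - a)` subsets and supersets, and a step of `a` towards `n / 2` (not past it)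
multiplies this count by at most `4 / 5`. On the other hand, for `r = k - 3`, Chebyshev's inequality
for the binomial distribution `B(n - r, 1 / 2)` shows that more than `4 / 5` of the subsets and
supersets of a set outside `ℋ_r` lie in `ℋ_r`, and that sets inside `ℋ_r` have degree at least about
`4 / 5 * 2 ^ (n - r)` in `ℋ_r`.

If an optimal `ℱ` missed part of `ℋ_r`, exchanging an equally large part of `ℱ \ ℋ_{k-1}` for it
would gain pairs, so `ℋ_r ⊆ ℱ`. Then for `j ∈ {k - 1, k}` there cannot be both `U ∈ ℋ_j \ ℱ` and
`V ∈ ℱ \ ℋ_j`: already inside `ℋ_r` the degree of `U` exceeds the total degree of `V`. So `ℱ` and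
`ℋ_j` are nested, and the size of `ℱ` decides which way.
-/

section BinomialTail

/-- The partial row sum `∑_{l ≤ r} (N choose l)` of Pascal's triangle, the size of a Hamming ball of
radius `r` in the `N`-cube; the range includes `r` itself. -/
def binomSum (N r : ℕ) : ℕ := ∑ l ∈ range (r + 1), N.choose l

lemma binomSum_le_binomSum {M N : ℕ} (h : M ≤ N) (r : ℕ) : binomSum M r ≤ binomSum N r :=
  sum_le_sum fun l _ => Nat.choose_le_choose l h

lemma card_filter_powerset_card_le {α : Type*} (S : Finset α) (r : ℕ) :
    #{T ∈ S.powerset | #T ≤ r} = binomSum #S r := by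
  rw [card_eq_sum_card_fiberwise (f := card) (t := range (r + 1)) fun T hT => by
    simpa [Nat.lt_succ_iff] using (mem_filter.1 hT).2]
  refine sum_congr rfl fun l hl => ?_
  rw [← card_powersetCard]
  congr 1
  ext T
  have := mem_range.1 hl
  simp only [mem_filter, mem_powerset, mem_powersetCard]
  grind

lemma binomSum_succ_le (N r : ℕ) : binomSum (N + 1) r ≤ 2 * binomSum N r := by
  have pascal : binomSum (N + 1) r = ∑ l ∈ range r, N.choose l + binomSum N r := by
    simp only [binomSum, sum_range_succ' _ r, Nat.choose_succ_succ', sum_add_distrib,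
      Nat.choose_zero_right, add_assoc]
  have shorter : ∑ l ∈ range r, N.choose l ≤ binomSum N r :=
    sum_le_sum_of_subset (range_mono r.le_succ)
  omega

lemma binomSum_add_le (N d r : ℕ) : binomSum (N + d) r ≤ 2 ^ d * binomSum N r := by
  induction d with
  | zero => simp
  | succ d ih =>
    calc binomSum (N + d + 1) r ≤ 2 * binomSum (N + d) r := binomSum_succ_le _ _
      _ ≤ 2 * (2 ^ d * binomSum N r) := by gcongr
      _ = 2 ^ (d + 1) * binomSum N r := by ring

lemma mul_two_pow_lt_mul_binomSum_of_le {M N r a b : ℕ} (hMN : M ≤ N)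
    (h : a * 2 ^ N < b * binomSum N r) : a * 2 ^ M < b * binomSum M r := by
  obtain ⟨d, rfl⟩ := Nat.exists_eq_add_of_le hMN
  refine lt_of_mul_lt_mul_left (a := 2 ^ d) ?_ (Nat.zero_le _)
  calc 2 ^ d * (a * 2 ^ M) = a * 2 ^ (M + d) := by ring
    _ < b * binomSum (M + d) r := h
    _ ≤ b * (2 ^ d * binomSum M r) := by gcongr; exact binomSum_add_le M d r
    _ = 2 ^ d * (b * binomSum M r) := by ring

lemma sum_choose_mul_sq (N : ℕ) :
    ∑ l ∈ range (N + 1), (N.choose l : ℝ) * (2 * l - N) ^ 2 = (N : ℝ) * 2 ^ N := by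
  have variance : ∑ l ∈ range (N + 1),
      ((N : ℝ) * (1 / 2) - l) ^ 2 * (N.choose l * (1 / 2) ^ l * (1 - 1 / 2) ^ (N - l)) =
        (N : ℝ) * (1 / 2) * (1 - 1 / 2) := by
    simpa only [bernsteinPolynomial, Polynomial.eval_finsetSum, nsmul_eq_mul, Polynomial.eval_mul,
      Polynomial.eval_pow, Polynomial.eval_sub, Polynomial.eval_natCast, Polynomial.eval_X,
      Polynomial.eval_one] using
      congrArg (Polynomial.eval (1 / 2 : ℝ)) (bernsteinPolynomial.variance ℝ N)
  calc ∑ l ∈ range (N + 1), (N.choose l : ℝ) * (2 * l - N) ^ 2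
      = ∑ l ∈ range (N + 1), 4 * 2 ^ N *
          (((N : ℝ) * (1 / 2) - l) ^ 2 * (N.choose l * (1 / 2) ^ l * (1 - 1 / 2) ^ (N - l))) := by
        refine sum_congr rfl fun l hl => ?_
        have hpow : (2 : ℝ) ^ N = 2 ^ l * 2 ^ (N - l) := by
          rw [← pow_add, Nat.add_sub_cancel' (Nat.lt_succ_iff.1 (mem_range.1 hl))]
        rw [hpow, show (1 - 1 / 2 : ℝ) = 1 / 2 by norm_num, one_div_pow, one_div_pow]
        field
    _ = (N : ℝ) * 2 ^ N := by rw [← mul_sum, variance]; ring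

lemma sum_Ico_choose_mul_sq_le {N r : ℕ} (hr : N ≤ 2 * (r + 1)) :
    (∑ l ∈ Ico (r + 1) (N + 1), (N.choose l : ℝ)) * (2 * (r + 1) - N) ^ 2 ≤ N * 2 ^ N := by
  rw [← sum_choose_mul_sq, sum_mul]
  calc ∑ l ∈ Ico (r + 1) (N + 1), (N.choose l : ℝ) * (2 * (r + 1) - N) ^ 2
      ≤ ∑ l ∈ Ico (r + 1) (N + 1), (N.choose l : ℝ) * (2 * l - N) ^ 2 := by
        refine sum_le_sum fun l hl => ?_
        have hrN : (0 : ℝ) ≤ 2 * (r + 1) - N := sub_nonneg.2 (by exact_mod_cast hr)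
        have hrl : (r + 1 : ℝ) ≤ l := by exact_mod_cast (mem_Ico.1 hl).1
        gcongr
    _ ≤ ∑ l ∈ range (N + 1), (N.choose l : ℝ) * (2 * l - N) ^ 2 :=
        sum_le_sum_of_subset_of_nonneg (fun l hl => mem_range.2 (mem_Ico.1 hl).2)
          fun l _ _ => by positivity

lemma sub_one_mul_two_pow_le_mul_binomSum {N r : ℕ} {c : ℝ} (hN : 0 < N) (hrN : r ≤ N)
    (hr : N ≤ 2 * (r + 1)) (hc : c * N ≤ (2 * (r + 1) - N) ^ 2) :
    (c - 1) * 2 ^ N ≤ c * binomSum N r := by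
  set tail := ∑ l ∈ Ico (r + 1) (N + 1), (N.choose l : ℝ)
  have hsplit : binomSum N r + tail = (2 : ℝ) ^ N := by
    rw [binomSum, Nat.cast_sum, sum_range_add_sum_Ico _ (by lia)]
    exact_mod_cast Nat.sum_range_choose N
  have htail : c * tail ≤ 2 ^ N := by
    refine le_of_mul_le_mul_left ?_ (Nat.cast_pos.2 hN : (0 : ℝ) < N)
    calc N * (c * tail) = tail * (c * N) := by ring
      _ ≤ tail * (2 * (r + 1) - N) ^ 2 := by gcongr
      _ ≤ N * 2 ^ N := sum_Ico_choose_mul_sq_le hr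
  linear_combination htail - c * hsplit

lemma exists_lt_binomSum_of_twelve_mul_le_sq {n k : ℕ} (hn : 0 < n) (hk : 2 * k ≤ n)
    (hnk : n ≤ 3 * k) (hsq : 12 * (n : ℝ) ≤ (3 * k - n) ^ 2) :
    ∃ r, r + 3 ≤ k ∧ 4 * 2 ^ (n - r) < 5 * binomSum (n - r) r := by
  obtain ⟨z, hz⟩ := Nat.exists_eq_add_of_le hnk
  have hk3 : (3 * k : ℝ) = n + z := by exact_mod_cast hz
  have hzn : (2 * z : ℝ) ≤ n := by exact_mod_cast (by lia : 2 * z ≤ n)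
  have hz24 : 24 ≤ z := by
    have : (0 : ℝ) < n := by exact_mod_cast hn
    have : (24 : ℝ) ≤ z := by nlinarith
    exact_mod_cast this
  obtain ⟨r, rfl⟩ := Nat.exists_eq_add_of_le' (show 3 ≤ k by lia)
  refine ⟨r, le_rfl, ?_⟩
  have hdev : (6 : ℝ) * (n - r : ℕ) ≤ (2 * (r + 1) - (n - r : ℕ)) ^ 2 := by
    push_cast [Nat.cast_sub (show r ≤ n by lia)] at hk3 hsq ⊢
    nlinarith
  have hcheb := sub_one_mul_two_pow_le_mul_binomSum (by lia) (by lia) (by lia) hdev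
  have hcheb' : 5 * 2 ^ (n - r) ≤ 6 * binomSum (n - r) r := by
    norm_num only at hcheb
    exact_mod_cast hcheb
  have : 0 < 2 ^ (n - r) := by positivity
  lia

lemma le_and_twelve_mul_le_sq_of_sqrt_le {n k : ℕ}
    (h : (n : ℝ) / 3 + √(2 * n * Real.log 2) ≤ k) :
    n ≤ 3 * k ∧ 12 * (n : ℝ) ≤ (3 * k - n) ^ 2 := by
  obtain ⟨hnk, hsq⟩ := Real.sqrt_le_iff.1 (le_sub_iff_add_le'.2 h)
  have hlog : (2 / 3 : ℝ) ≤ Real.log 2 := by linarith [Real.log_two_gt_d9]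
  have hn : 2 * n * (2 / 3) ≤ 2 * n * Real.log 2 := by gcongr
  refine ⟨?_, by linarith⟩
  exact_mod_cast (by linarith : (n : ℝ) ≤ 3 * k)

lemma exists_lt_binomSum_of_sqrt_le {n k : ℕ} (hn : 0 < n)
    (h : (n : ℝ) / 3 + √(2 * n * Real.log 2) ≤ k) (hk : 2 * k ≤ n) :
    ∃ r, r + 3 ≤ k ∧ 4 * 2 ^ (n - r) < 5 * binomSum (n - r) r :=
  have ⟨hnk, hsq⟩ := le_and_twelve_mul_le_sq_of_sqrt_le h
  exists_lt_binomSum_of_twelve_mul_le_sq hn hk hnk hsq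

end BinomialTail

section ConeSize

/-- The number of subsets plus the number of supersets of an `a`-element subset of `[n]`; the set
itself is counted twice. Meaningful for `a ≤ n` only. -/
def coneSize (n a : ℕ) : ℕ := 2 ^ a + 2 ^ (n - a)

lemma coneSize_sub {n a : ℕ} (h : a ≤ n) : coneSize n (n - a) = coneSize n a := by
  rw [coneSize, coneSize, Nat.sub_sub_self h, add_comm]

lemma coneSize_le_coneSize {n a b : ℕ} (hab : a ≤ b) (hbn : a + b ≤ n) :
    coneSize n b ≤ coneSize n a := by
  obtain ⟨p, rfl⟩ := Nat.exists_eq_add_of_le hab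
  obtain ⟨q, rfl⟩ := Nat.exists_eq_add_of_le hbn
  rw [coneSize, coneSize, show a + (a + p) + q - (a + p) = a + q by lia,
    show a + (a + p) + q - a = p + (a + q) by lia]
  have rearrangement := mul_add_mul_le_mul_add_mul (Nat.one_le_two_pow (n := p))
    (Nat.pow_le_pow_right two_pos (Nat.le_add_right a q))
  calc 2 ^ (a + p) + 2 ^ (a + q) = 1 * 2 ^ (a + q) + 2 ^ p * 2 ^ a := by ring
    _ ≤ 1 * 2 ^ a + 2 ^ p * 2 ^ (a + q) := rearrangement
    _ = 2 ^ a + 2 ^ (p + (a + q)) := by ring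

lemma five_mul_coneSize_succ_le {n a : ℕ} (h : 2 * (a + 1) ≤ n) :
    5 * coneSize n (a + 1) ≤ 4 * coneSize n a := by
  obtain ⟨q, rfl⟩ := Nat.exists_eq_add_of_le h
  rw [coneSize, coneSize, show 2 * (a + 1) + q - (a + 1) = a + q + 1 by lia,
    show 2 * (a + 1) + q - a = a + q + 2 by lia]
  have : 2 ^ a ≤ 2 ^ (a + q) := Nat.pow_le_pow_right two_pos (Nat.le_add_right a q)
  simp only [pow_succ]
  lia

end ConeSize

section Degree

variable {α : Type*} [DecidableEq α]

/-- The number of members of `𝒢` which are proper subsets or proper supersets of `S`, i.e. the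
degree of `S` towards `𝒢` in the comparability graph. `S` need not belong to `𝒢`. -/
def compDegree (𝒢 : Finset (Finset α)) (S : Finset α) : ℕ :=
  #{G ∈ 𝒢 | G ⊂ S} + #{G ∈ 𝒢 | S ⊂ G}

lemma compDegree_mono {𝒢 ℋ : Finset (Finset α)} (h : 𝒢 ⊆ ℋ) (S : Finset α) :
    compDegree 𝒢 S ≤ compDegree ℋ S :=
  Nat.add_le_add (card_le_card (filter_subset_filter _ h)) (card_le_card (filter_subset_filter _ h))

lemma compDegree_union {𝒢 ℋ : Finset (Finset α)} (h : Disjoint 𝒢 ℋ) (S : Finset α) :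
    compDegree (𝒢 ∪ ℋ) S = compDegree 𝒢 S + compDegree ℋ S := by
  simp only [compDegree, filter_union, card_union_of_disjoint (disjoint_filter_filter h)]
  lia

lemma compDegree_univ_add_two [Fintype α] (S : Finset α) :
    compDegree univ S + 2 = coneSize (Fintype.card α) #S := by
  have below : ({G | G ⊂ S} : Finset (Finset α)) = Iio S := by ext; simp
  have above : ({G | S ⊂ G} : Finset (Finset α)) = Ioc S univ := by ext; simp
  rw [compDegree, coneSize, below, above, card_Iio_finset, card_Ioc_finset (subset_univ S),
    card_univ]
  have := Nat.one_le_two_pow (n := #S)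
  have := Nat.one_le_two_pow (n := Fintype.card α - #S)
  lia

lemma compDegree_add_two_le [Fintype α] (𝒢 : Finset (Finset α)) (S : Finset α) :
    compDegree 𝒢 S + 2 ≤ coneSize (Fintype.card α) #S :=
  compDegree_univ_add_two S ▸ Nat.add_le_add_right (compDegree_mono (subset_univ 𝒢) S) 2

end Degree

section Averaging

lemma exists_le_of_sum_le_of_card_eq {ι κ M : Type*} [AddCommMonoid M] [LinearOrder M]
    [IsOrderedCancelAddMonoid M] {s : Finset ι} {t : Finset κ} {f : ι → M} {g : κ → M}
    (hs : s.Nonempty) (hcard : #s = #t) (h : ∑ i ∈ s, f i ≤ ∑ j ∈ t, g j) :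
    ∃ i ∈ s, ∃ j ∈ t, f i ≤ g j := by
  let e : s ≃ t := equivOfCardEq hcard
  have hsum : ∑ i : s, f i ≤ ∑ i : s, g (e i) := by
    rwa [e.sum_comp (fun j : t => g j), sum_coe_sort, sum_coe_sort]
  obtain ⟨i, -, hi⟩ := exists_le_of_sum_le (univ_nonempty_iff.2 hs.to_subtype) hsum
  exact ⟨i, i.2, e i, (e i).2, hi⟩

end Averaging

section Exchange

variable {n : ℕ} {ℱ 𝒬 ℋ 𝒰 𝒱 : Finset (Finset (Fin n))}

lemma crossComp_eq_sum (𝒜 ℬ : Finset (Finset (Fin n))) :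
    crossComp 𝒜 ℬ = ∑ A ∈ 𝒜, ∑ B ∈ ℬ, if A ⊂ B then 1 else 0 := by
  rw [crossComp, card_filter, sum_product]

lemma sum_compDegree (𝒜 ℬ : Finset (Finset (Fin n))) :
    ∑ A ∈ 𝒜, compDegree ℬ A = crossComp ℬ 𝒜 + crossComp 𝒜 ℬ := by
  rw [crossComp_eq_sum, crossComp_eq_sum, sum_comm, ← sum_add_distrib]
  simp only [compDegree, card_filter]

lemma sum_compDegree_self (𝒜 : Finset (Finset (Fin n))) :
    ∑ A ∈ 𝒜, compDegree 𝒜 A = 2 * compCount 𝒜 := by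
  rw [sum_compDegree, compCount, two_mul]

lemma compCount_union {𝒜 ℬ : Finset (Finset (Fin n))} (h : Disjoint 𝒜 ℬ) :
    compCount (𝒜 ∪ ℬ) = compCount 𝒜 + ∑ B ∈ ℬ, compDegree 𝒜 B + compCount ℬ := by
  rw [sum_compDegree]
  simp only [compCount, crossComp_eq_sum, sum_union h, sum_add_distrib]
  lia

lemma compCount_le_maxComp (𝒢 : Finset (Finset (Fin n))) : compCount 𝒢 ≤ maxComp n #𝒢 :=
  le_sup (f := compCount) (by simp [mem_powersetCard])

lemma sum_compDegree_sdiff_add_compCount_le (hmax : compCount ℱ = maxComp n #ℱ) (h𝒱 : 𝒱 ⊆ ℱ)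
    (h𝒰 : Disjoint ℱ 𝒰) (hcard : #𝒰 = #𝒱) :
    ∑ U ∈ 𝒰, compDegree (ℱ \ 𝒱) U + compCount 𝒰 ≤ ∑ V ∈ 𝒱, compDegree ℱ V := by
  have hdisj : Disjoint (ℱ \ 𝒱) 𝒰 := h𝒰.mono_left sdiff_subset
  have hℱ : ℱ \ 𝒱 ∪ 𝒱 = ℱ := sdiff_union_of_subset h𝒱
  have optimal : compCount (ℱ \ 𝒱 ∪ 𝒰) ≤ compCount (ℱ \ 𝒱 ∪ 𝒱) := by
    have hsize : #(ℱ \ 𝒱 ∪ 𝒰) = #ℱ := by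
      rw [card_union_of_disjoint hdisj, hcard, ← card_union_of_disjoint sdiff_disjoint, hℱ]
    rw [hℱ, hmax, ← hsize]
    exact compCount_le_maxComp _
  have hdeg : ∑ V ∈ 𝒱, compDegree ℱ V =
      ∑ V ∈ 𝒱, compDegree (ℱ \ 𝒱) V + 2 * compCount 𝒱 := by
    rw [← sum_compDegree_self, ← sum_add_distrib]
    exact sum_congr rfl fun V _ => by rw [← compDegree_union sdiff_disjoint, hℱ]
  rw [compCount_union hdisj, compCount_union sdiff_disjoint] at optimal
  lia

lemma compDegree_erase_le (hmax : compCount ℱ = maxComp n #ℱ) {U V : Finset (Fin n)}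
    (hU : U ∉ ℱ) (hV : V ∈ ℱ) : compDegree (ℱ.erase V) U ≤ compDegree ℱ V := by
  have := sum_compDegree_sdiff_add_compCount_le hmax (singleton_subset_iff.2 hV)
    (disjoint_singleton_right.2 hU) (by simp only [card_singleton])
  simp only [sum_singleton, sdiff_singleton_eq_erase] at this
  lia

/- Each pair inside `𝒰` is counted twice by the degrees but only gained once by the exchange, whence
the factor `2`. -/
lemma sum_compDegree_le_two_mul (hmax : compCount ℱ = maxComp n #ℱ) (h𝒱 : 𝒱 ⊆ ℱ)
    (h𝒰 : Disjoint ℱ 𝒰) (hcard : #𝒰 = #𝒱) (h𝒬 : 𝒬 ⊆ ℱ \ 𝒱 ∪ 𝒰) :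
    ∑ U ∈ 𝒰, compDegree 𝒬 U ≤ 2 * ∑ V ∈ 𝒱, compDegree ℱ V := by
  have hdisj : Disjoint (ℱ \ 𝒱) 𝒰 := h𝒰.mono_left sdiff_subset
  calc ∑ U ∈ 𝒰, compDegree 𝒬 U
      ≤ ∑ U ∈ 𝒰, compDegree (ℱ \ 𝒱 ∪ 𝒰) U := sum_le_sum fun U _ => compDegree_mono h𝒬 U
    _ = ∑ U ∈ 𝒰, compDegree (ℱ \ 𝒱) U + 2 * compCount 𝒰 := by
        simp only [compDegree_union hdisj, sum_add_distrib, sum_compDegree_self]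
    _ ≤ 2 * (∑ U ∈ 𝒰, compDegree (ℱ \ 𝒱) U + compCount 𝒰) := by lia
    _ ≤ 2 * ∑ V ∈ 𝒱, compDegree ℱ V := by
        gcongr
        exact sum_compDegree_sdiff_add_compCount_le hmax h𝒱 h𝒰 hcard

lemma exists_compDegree_le_two_mul (hmax : compCount ℱ = maxComp n #ℱ) (h𝒬ℋ : 𝒬 ⊆ ℋ)
    (hcard : #ℋ ≤ #ℱ) (h𝒬 : ¬𝒬 ⊆ ℱ) :
    ∃ U ∈ 𝒬 \ ℱ, ∃ V ∈ ℱ \ ℋ, compDegree 𝒬 U ≤ 2 * compDegree ℱ V := by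
  have hle : #(𝒬 \ ℱ) ≤ #(ℱ \ ℋ) :=
    (card_le_card (sdiff_subset_sdiff h𝒬ℋ le_rfl)).trans (card_sdiff_le_card_sdiff_iff.2 hcard)
  obtain ⟨𝒱, h𝒱, hc⟩ := exists_subset_card_eq hle
  have hsub : 𝒬 ⊆ ℱ \ 𝒱 ∪ 𝒬 \ ℱ := by grind
  have hsum := sum_compDegree_le_two_mul hmax (h𝒱.trans sdiff_subset) disjoint_sdiff hc.symm hsub
  rw [mul_sum] at hsum
  obtain ⟨U, hU, V, hV, hUV⟩ :=
    exists_le_of_sum_le_of_card_eq (sdiff_nonempty.2 h𝒬) hc.symm hsum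
  exact ⟨U, hU, V, h𝒱 hV, hUV⟩

end Exchange

section Hfam

variable {n r j k : ℕ} {U V : Finset (Fin n)} {ℱ : Finset (Finset (Fin n))}

lemma mem_Hfam : U ∈ Hfam n j ↔ #U ≤ j ∨ n - j ≤ #U := by simp [Hfam]

lemma Hfam_mono (n : ℕ) : Monotone (Hfam n) := fun i j hij U hU => by
  rw [mem_Hfam] at hU ⊢
  lia

lemma compl_mem_Hfam : Uᶜ ∈ Hfam n j ↔ U ∈ Hfam n j := by
  have := card_finset_fin_le U
  rw [mem_Hfam, mem_Hfam, card_compl, Fintype.card_fin]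
  lia

lemma coneSize_succ_le_of_notMem_Hfam (hV : V ∉ Hfam n j) :
    coneSize n #V ≤ coneSize n (j + 1) := by
  rw [mem_Hfam] at hV
  exact coneSize_le_coneSize (by lia) (by lia)

lemma coneSize_le_of_mem_Hfam (hj : 2 * j ≤ n) (hU : U ∈ Hfam n j) :
    coneSize n j ≤ coneSize n #U := by
  rcases mem_Hfam.1 hU with h | h
  · exact coneSize_le_coneSize h (by lia)
  · have hUn := card_finset_fin_le U
    rw [← coneSize_sub hUn]
    exact coneSize_le_coneSize (by lia) (by lia)

lemma five_mul_coneSize_le (hU : U ∈ Hfam n j) (hV : V ∉ Hfam n j) :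
    5 * coneSize n #V ≤ 4 * coneSize n #U := by
  have hj : 2 * (j + 1) ≤ n := by
    rw [mem_Hfam] at hV
    lia
  have := coneSize_succ_le_of_notMem_Hfam hV
  have := five_mul_coneSize_succ_le hj
  have := coneSize_le_of_mem_Hfam (by lia) hU
  lia

lemma binomSum_card_le (S : Finset (Fin n)) (r : ℕ) :
    binomSum #S r ≤ #{G ∈ Hfam n r | G ⊂ S} + 1 := by
  rw [← card_filter_powerset_card_le]
  refine (card_le_card fun T hT => ?_).trans (card_insert_le S _)
  simp only [mem_filter, mem_powerset, mem_insert, mem_Hfam] at hT ⊢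
  exact (eq_or_ssubset_of_subset hT.1).imp_right fun h => ⟨Or.inl hT.2, h⟩

lemma card_filter_ssubset_compl (S : Finset (Fin n)) (r : ℕ) :
    #{G ∈ Hfam n r | G ⊂ Sᶜ} = #{G ∈ Hfam n r | S ⊂ G} := by
  refine card_nbij' compl compl ?_ ?_ (fun G _ => compl_compl G) fun G _ => compl_compl G
  · intro G hG
    rw [mem_coe, mem_filter] at hG ⊢
    exact ⟨compl_mem_Hfam.2 hG.1, compl_ssubset_compl.1 (by rw [compl_compl]; exact hG.2)⟩
  · intro G hG
    rw [mem_coe, mem_filter] at hG ⊢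
    exact ⟨compl_mem_Hfam.2 hG.1, compl_ssubset_compl.2 hG.2⟩

lemma binomSum_add_binomSum_le_compDegree_Hfam (S : Finset (Fin n)) (r : ℕ) :
    binomSum #S r + binomSum (n - #S) r ≤ compDegree (Hfam n r) S + 2 := by
  have below := binomSum_card_le S r
  have above := binomSum_card_le Sᶜ r
  rw [card_compl, Fintype.card_fin, card_filter_ssubset_compl] at above
  rw [compDegree]
  lia

lemma lt_compDegree_Hfam_of_mem (htail : 4 * 2 ^ (n - r) < 5 * binomSum (n - r) r)
    (hU : U ∈ Hfam n r) : 4 * 2 ^ (n - r) < 5 * (compDegree (Hfam n r) U + 2) := by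
  have hdeg := binomSum_add_binomSum_le_compDegree_Hfam U r
  rcases mem_Hfam.1 hU with h | h
  · have := binomSum_le_binomSum (show n - r ≤ n - #U by lia) r
    lia
  · have := binomSum_le_binomSum h r
    lia

lemma four_mul_coneSize_lt_of_notMem (htail : 4 * 2 ^ (n - r) < 5 * binomSum (n - r) r)
    (hU : U ∉ Hfam n r) : 4 * coneSize n #U < 5 * (compDegree (Hfam n r) U + 2) := by
  have hdeg := binomSum_add_binomSum_le_compDegree_Hfam U r
  rw [mem_Hfam] at hU
  have below := mul_two_pow_lt_mul_binomSum_of_le (show #U ≤ n - r by lia) htail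
  have above := mul_two_pow_lt_mul_binomSum_of_le (show n - #U ≤ n - r by lia) htail
  rw [coneSize]
  lia

lemma Hfam_subset_of_Mnum_le_card (hrk : r + 3 ≤ k) (hk : 2 * k ≤ n)
    (htail : 4 * 2 ^ (n - r) < 5 * binomSum (n - r) r) (hcard : Mnum n (k - 1) ≤ #ℱ)
    (hmax : compCount ℱ = maxComp n #ℱ) : Hfam n r ⊆ ℱ := by
  by_contra hnot
  obtain ⟨U, hU, V, hV, hUV⟩ :=
    exists_compDegree_le_two_mul hmax (Hfam_mono n (show r ≤ k - 1 by lia)) hcard hnot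
  have hdegU := lt_compDegree_Hfam_of_mem htail (mem_sdiff.1 hU).1
  have hpowU : 8 * 2 ^ (n - k) ≤ 2 ^ (n - r) := by
    rw [show 8 = 2 ^ 3 by rfl, ← pow_add]
    exact Nat.pow_le_pow_right two_pos (by lia)
  have hdegV : compDegree ℱ V + 2 ≤ 2 ^ k + 2 ^ (n - k) := by
    calc compDegree ℱ V + 2 ≤ coneSize n #V := by simpa using compDegree_add_two_le ℱ V
      _ ≤ coneSize n (k - 1 + 1) := coneSize_succ_le_of_notMem_Hfam (mem_sdiff.1 hV).2
      _ = 2 ^ k + 2 ^ (n - k) := by rw [Nat.sub_add_cancel (by lia), coneSize]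
  have hpowV : 2 ^ k ≤ 2 ^ (n - k) := Nat.pow_le_pow_right two_pos (by lia)
  lia

lemma Hfam_subset_or_subset_Hfam (hrj : r ≤ j)
    (htail : 4 * 2 ^ (n - r) < 5 * binomSum (n - r) r) (hr : Hfam n r ⊆ ℱ)
    (hmax : compCount ℱ = maxComp n #ℱ) : Hfam n j ⊆ ℱ ∨ ℱ ⊆ Hfam n j := by
  by_contra! ⟨hHℱ, hℱH⟩
  obtain ⟨U, hUj, hU⟩ := not_subset.1 hHℱ
  obtain ⟨V, hV, hVj⟩ := not_subset.1 hℱH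
  have hr' : Hfam n r ⊆ ℱ.erase V := subset_erase.2 ⟨hr, fun h => hVj (Hfam_mono n hrj h)⟩
  have hexchange : compDegree (Hfam n r) U ≤ compDegree ℱ V :=
    (compDegree_mono hr' U).trans (compDegree_erase_le hmax hU hV)
  have hdegU := four_mul_coneSize_lt_of_notMem htail fun h => hU (hr h)
  have hdegV : compDegree ℱ V + 2 ≤ coneSize n #V := by simpa using compDegree_add_two_le ℱ V
  have := five_mul_coneSize_le hUj hVj
  lia

end Hfam

theorem stmt12_general {n k r m : ℕ} (hrk : r + 3 ≤ k) (hk : 2 * k ≤ n)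
    (htail : 4 * 2 ^ (n - r) < 5 * binomSum (n - r) r)
    (hm1 : Mnum n (k - 1) ≤ m) (hm2 : m ≤ Mnum n k)
    {ℱ : Finset (Finset (Fin n))} (hcard : #ℱ = m) (hmax : compCount ℱ = maxComp n m) :
    Hfam n (k - 1) ⊆ ℱ ∧ ℱ ⊆ Hfam n k := by
  subst hcard
  have hr := Hfam_subset_of_Mnum_le_card hrk hk htail hm1 hmax
  constructor
  · exact (Hfam_subset_or_subset_Hfam (by lia) htail hr hmax).elim id
      fun h => (eq_of_subset_of_card_le h hm1).ge
  · exact (Hfam_subset_or_subset_Hfam (by lia) htail hr hmax).elim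
      (fun h => (eq_of_subset_of_card_le h hm2).ge) id

theorem stmt12 (n : ℕ) (hn : 0 < n) (k : ℕ)
    (hk1 : (n : ℝ) / 3 + Real.sqrt (2 * n * Real.log 2) ≤ k)
    (hk2 : (k : ℝ) ≤ (n : ℝ) / 2)
    (m : ℕ) (hm1 : Mnum n (k - 1) ≤ m) (hm2 : m ≤ Mnum n k)
    (ℱ : Finset (Finset (Fin n))) (hcard : ℱ.card = m)
    (hmax : compCount ℱ = maxComp n m) :
    Hfam n (k - 1) ⊆ ℱ ∧ ℱ ⊆ Hfam n k := by
  have hk : 2 * k ≤ n := by exact_mod_cast (by linarith : (2 : ℝ) * k ≤ n)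
  obtain ⟨r, hrk, htail⟩ := exists_lt_binomSum_of_sqrt_le hn hk1 hk
  exact stmt12_general hrk hk htail hm1 hm2 hcard hmax
end

section
/- Let n and s be integers satisfying n/3 < s ≤ n/2. Then for every integer t with n−s ≤ t ≤ n, one has 2^{n−t} + Σ_{j=0}^{s} binom(t,j) ≥ 2^{s} + Σ_{j=0}^{s} binom(n−s, j); that is, the quantity 2^{n−t} + Σ_{j≤s} binom(t,j) is minimised over n−s ≤ t ≤ n at t = n−s. -/
open Finset

/-!
Write `f t = 2 ^ (n - t) + ∑ j ≤ s, binom(t, j)`. By Pascal's rule, passing from `t` to `t + 1`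
adds `∑ j < s, binom(t, j)` and removes `2 ^ (n - t - 1)`. For `n - s ≤ t < n` the exponent
`k = n - t - 1` is less than `s`, and it is at most `t` as soon as `2 * s ≤ n + 1`, so that
`2 ^ k = ∑ j ≤ k, binom(k, j) ≤ ∑ j < s, binom(t, j)`. Hence `f` is nondecreasing
from `t = n - s` on.
-/

theorem sum_range_succ_choose_succ (t s : ℕ) :
    ∑ j ∈ range (s + 1), (t + 1).choose j =
      ∑ j ∈ range (s + 1), t.choose j + ∑ j ∈ range s, t.choose j := by
  simp only [sum_range_succ' _ s, Nat.choose_succ_succ', sum_add_distrib, Nat.choose_zero_right]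
  ring

theorem two_pow_le_sum_range_choose {k s t : ℕ} (hks : k < s) (hkt : k ≤ t) :
    2 ^ k ≤ ∑ j ∈ range s, t.choose j :=
  calc
    2 ^ k = ∑ j ∈ range (k + 1), k.choose j := (Nat.sum_range_choose k).symm
    _ ≤ ∑ j ∈ range (k + 1), t.choose j := by gcongr
    _ ≤ ∑ j ∈ range s, t.choose j := by gcongr; exact hks

theorem stmt14_general {n s : ℕ} (h : 2 * s ≤ n + 1) :
    MonotoneOn (fun t ↦ 2 ^ (n - t) + ∑ j ∈ range (s + 1), t.choose j) (Set.Icc (n - s) n) := by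
  refine monotoneOn_of_le_add_one Set.ordConnected_Icc fun t _ ⟨ht, _⟩ ⟨_, ht'⟩ ↦ ?_
  have hpow : 2 ^ (n - (t + 1)) ≤ ∑ j ∈ range s, t.choose j :=
    two_pow_le_sum_range_choose (by lia) (by lia)
  calc
    2 ^ (n - t) + ∑ j ∈ range (s + 1), t.choose j
      = 2 ^ (n - (t + 1)) + (∑ j ∈ range (s + 1), t.choose j + 2 ^ (n - (t + 1))) := by
        rw [show n - t = n - (t + 1) + 1 by lia, pow_succ]
        ring
    _ ≤ 2 ^ (n - (t + 1)) + (∑ j ∈ range (s + 1), t.choose j + ∑ j ∈ range s, t.choose j) := by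
        gcongr
    _ = 2 ^ (n - (t + 1)) + ∑ j ∈ range (s + 1), (t + 1).choose j := by
        rw [sum_range_succ_choose_succ]

theorem stmt14 (n s : ℕ) (h1 : (n : ℝ) / 3 < (s : ℝ)) (h2 : (s : ℝ) ≤ (n : ℝ) / 2)
    (t : ℕ) (ht1 : n - s ≤ t) (ht2 : t ≤ n) :
    2 ^ s + ∑ j ∈ Finset.range (s + 1), (n - s).choose j
      ≤ 2 ^ (n - t) + ∑ j ∈ Finset.range (s + 1), t.choose j := by
  have hs : 2 * s ≤ n := by rify; linarith
  simpa [Nat.sub_sub_self (show s ≤ n by lia)] using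
    stmt14_general (by lia) ⟨le_rfl, Nat.sub_le n s⟩ ⟨ht1, ht2⟩ ht1
end
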